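/- arXiv:1405.2999 — 2 statements merged into one kernel-verified Lean document; each statement's English description precedes it below -/
import Mathlib

section
/- Let n ≥ 2, M ≥ 1, let A = (a^{αβ}_{rs}) be a complex coefficient tensor, let E = (E_{γβ}) : ℝⁿ∖{0} → ℂ^{M×M} be C² with each ∂_r E_{γβ} positively homogeneous of degree 1-n, and suppose k = (k_{γα}) : ℝⁿ∖{0} → ℂ^{M×M} is continuous, positively homogeneous of degree -n, and satisfies Σ_{r,β} a^{βα}_{rs}(∂_r E_{γβ})(x) = x_s k_{γα}(x) for all x ∈ ℝⁿ∖{0}, all s, γ, α. Set P := 2k(·,1) on ℝ^{n-1} and Q^{(j)}(x') := ((∂_j E_{γβ})(x',1))_{γ,β}. Fix p ∈ (1,∞) and f = (f_α) ∈ L^p_1(ℝ^{n-1};ℂ^M). Then for every t > 0, every γ ∈ {1,…,M}, and every x' ∈ ℝ^{n-1}: (i) ∂_t[(P_t * f)_γ(x')] = -2 Σ_{s=1}^{n-1} Σ_{r,α,β} a^{βα}_{rs} ((Q^{(r)}_{γβ})_t * ∂_s f_α)(x'); and (ii) for every r ∈ {1,…,n-1}, ∂_t[(Q^{(r)}_t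 * f)_γ(x')] = (Q^{(n)}_t * (∂_r f))_γ(x'). -/
open MeasureTheory Filter Metric Real
open scoped ENNReal NNReal Topology

noncomputable section

/-- The point `(x', t)` of `ℝⁿ`, where `x' ∈ ℝ^{n-1}` and `t ∈ ℝ` is the last coordinate. -/
def toUp {n : ℕ} (x' : EuclideanSpace ℝ (Fin (n - 1))) (t : ℝ) :
    EuclideanSpace ℝ (Fin n) :=
  (WithLp.equiv 2 (Fin n → ℝ)).symm
    (fun i => if h : (i : ℕ) < n - 1 then x' ⟨i, h⟩ else t)

/-- The first `n-1` coordinates of a point of `ℝⁿ`. -/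
def xinit {n : ℕ} (x : EuclideanSpace ℝ (Fin n)) : EuclideanSpace ℝ (Fin (n - 1)) :=
  (WithLp.equiv 2 (Fin (n - 1) → ℝ)).symm
    (fun i => x ⟨(i : ℕ), Nat.lt_of_lt_of_le i.isLt (Nat.sub_le n 1)⟩)

/-- The last coordinate of a point of `ℝⁿ`. -/
def xlast {n : ℕ} (x : EuclideanSpace ℝ (Fin n)) : ℝ :=
  if h : 0 < n then x ⟨n - 1, by omega⟩ else 0

/-- The upper half space `ℝⁿ₊`. -/
def upperHalfSpace (n : ℕ) : Set (EuclideanSpace ℝ (Fin n)) := {x | 0 < xlast x}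

/-- The embedding `Fin (n-1) → Fin n`. -/
def finUp {n : ℕ} (i : Fin (n - 1)) : Fin n :=
  ⟨(i : ℕ), Nat.lt_of_lt_of_le i.isLt (Nat.sub_le n 1)⟩

/-- The last index of `Fin n`. -/
def lastIdx (n : ℕ) (h : 0 < n) : Fin n := ⟨n - 1, by omega⟩

/-- Partial derivative along the `i`-th coordinate direction. -/
def pd {n : ℕ} {F : Type*} [NormedAddCommGroup F] [NormedSpace ℝ F]
    (i : Fin n) (u : EuclideanSpace ℝ (Fin n) → F) (x : EuclideanSpace ℝ (Fin n)) : F :=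
  fderiv ℝ u x (EuclideanSpace.single i 1)

/-- Iterated mixed partial derivative along the string of coordinate directions `d`. -/
def mpd {n : ℕ} {F : Type*} [NormedAddCommGroup F] [NormedSpace ℝ F]
    (k : ℕ) (d : Fin k → Fin n) (u : EuclideanSpace ℝ (Fin n) → F)
    (x : EuclideanSpace ℝ (Fin n)) : F :=
  iteratedFDeriv ℝ k u x (fun i => EuclideanSpace.single (d i) 1)

/-- The nontangential approach filter for the cone `Γ_κ(x')` (points written as `(y', t)`). -/
def ntFilter {n : ℕ} (κ : ℝ) (x' : EuclideanSpace ℝ (Fin (n - 1))) :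
    Filter ((EuclideanSpace ℝ (Fin (n - 1))) × ℝ) :=
  (nhds (x', (0 : ℝ))) ⊓ Filter.principal {q | 0 < q.2 ∧ dist x' q.1 < κ * q.2}

/-- The nontangential maximal function (aperture `κ`) of `u : ℝⁿ → F`,
as an `ℝ≥0∞`-valued function on `ℝ^{n-1}`. -/
def ntMax {n : ℕ} {F : Type*} [NormedAddCommGroup F] (κ : ℝ)
    (u : EuclideanSpace ℝ (Fin n) → F) (x' : EuclideanSpace ℝ (Fin (n - 1))) : ℝ≥0∞ :=
  ⨆ (y' : EuclideanSpace ℝ (Fin (n - 1))) (t : ℝ) (_ : 0 < t ∧ dist x' y' < κ * t),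
    (‖u (toUp y' t)‖₊ : ℝ≥0∞)

/-- The `L^p` norm (`p ∈ (0,∞]`) of an `ℝ≥0∞`-valued function on `ℝ^m`. -/
def lpNormE {m : ℕ} (g : EuclideanSpace ℝ (Fin m) → ℝ≥0∞) (p : ℝ≥0∞) : ℝ≥0∞ :=
  if p = ∞ then essSup g volume
  else (∫⁻ x', (g x') ^ p.toReal) ^ (1 / p.toReal)

/-- The Hardy–Littlewood maximal function. -/
def hlMax {m : ℕ} {F : Type*} [NormedAddCommGroup F]
    (f : EuclideanSpace ℝ (Fin m) → F) (x' : EuclideanSpace ℝ (Fin m)) : ℝ≥0∞ :=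
  ⨆ (r : ℝ) (_ : 0 < r),
    (volume (ball x' r))⁻¹ * ∫⁻ y' in ball x' r, (‖f y'‖₊ : ℝ≥0∞)

/-- The Legendre-Hadamard ellipticity condition for the coefficient tensor `A`,
where `A r s α β` stands for `a^{αβ}_{rs}`. -/
def LegendreHadamard {n M : ℕ} (A : Fin n → Fin n → Fin M → Fin M → ℂ) : Prop :=
  ∃ κ₀ : ℝ, 0 < κ₀ ∧ ∀ (ξ : Fin n → ℝ) (η : Fin M → ℂ),
    κ₀ * (∑ r, ξ r ^ 2) * (∑ a, ‖η a‖ ^ 2) ≤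
      (∑ r, ∑ s, ∑ a, ∑ b, A r s a b * ξ r * ξ s * (starRingEnd ℂ) (η a) * η b).re

/-- `g` is the weak (distributional) mixed partial derivative of `f` of order `k`
along the string of directions `d`. -/
def IsWeakDeriv {m : ℕ} {F : Type*} [NormedAddCommGroup F] [NormedSpace ℝ F]
    (k : ℕ) (d : Fin k → Fin m) (f g : EuclideanSpace ℝ (Fin m) → F) : Prop :=
  ∀ φ : EuclideanSpace ℝ (Fin m) → ℝ, ContDiff ℝ (⊤ : ℕ∞) φ → HasCompactSupport φ →
    ∫ x', (mpd k d φ x') • f x' = ((-1 : ℝ) ^ k) • ∫ x', φ x' • g x'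

/-- The surface area `ω_{n-1}` of the unit sphere `S^{n-1}` in `ℝⁿ`. -/
def sphereArea (n : ℕ) : ℝ :=
  (n : ℝ) * (volume (ball (0 : EuclideanSpace ℝ (Fin n)) (1 : ℝ))).toReal

/-- The parabolic dilation `F_t(x') = t^{1-n} F(x'/t)` of a matrix-valued kernel. -/
def matDil {n M : ℕ} (P : EuclideanSpace ℝ (Fin (n - 1)) → Matrix (Fin M) (Fin M) ℂ)
    (t : ℝ) (x' : EuclideanSpace ℝ (Fin (n - 1))) : Matrix (Fin M) (Fin M) ℂ :=
  (t ^ ((1 : ℤ) - (n : ℤ))) • P (t⁻¹ • x')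

/-- The convolution `(P_t * f)(x')` of a dilated matrix kernel with a `ℂ^M`-valued function. -/
def matConv {n M : ℕ} (P : EuclideanSpace ℝ (Fin (n - 1)) → Matrix (Fin M) (Fin M) ℂ)
    (f : EuclideanSpace ℝ (Fin (n - 1)) → EuclideanSpace ℂ (Fin M))
    (t : ℝ) (x' : EuclideanSpace ℝ (Fin (n - 1))) : EuclideanSpace ℂ (Fin M) :=
  (WithLp.equiv 2 (Fin M → ℂ)).symm
    (fun γ => ∫ y', ∑ α, matDil P t (x' - y') γ α * f y' α)

/-- The auxiliary kernel `Q^{(j)}_{γβ}(x') := (∂_j E_{γβ})(x', 1)`. -/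
def Qker {n M : ℕ} (E : EuclideanSpace ℝ (Fin n) → Matrix (Fin M) (Fin M) ℂ)
    (j : Fin n) (γ β : Fin M) (x' : EuclideanSpace ℝ (Fin (n - 1))) : ℂ :=
  pd j (fun y => E y γ β) (toUp x' 1)

/-- The dilated auxiliary kernel `(Q^{(j)}_{γβ})_t(x') = t^{1-n} Q^{(j)}_{γβ}(x'/t)`,
viewed as a function of the point `x = (x', t) ∈ ℝⁿ₊`. -/
def QkerDil {n M : ℕ} (E : EuclideanSpace ℝ (Fin n) → Matrix (Fin M) (Fin M) ℂ)
    (j : Fin n) (γ β : Fin M) (x : EuclideanSpace ℝ (Fin n)) : ℂ :=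
  ((xlast x : ℂ) ^ ((1 : ℤ) - (n : ℤ))) * Qker E j γ β ((xlast x)⁻¹ • xinit x)

lemma aux_moll {m : ℕ} (F : EuclideanSpace ℝ (Fin m) → ℂ) (hF : LocallyIntegrable F volume)
    (h : EuclideanSpace ℝ (Fin m) → ℝ) (hc : Continuous h) (hs : HasCompactSupport h)
    (b : ℕ → ContDiffBump (0 : EuclideanSpace ℝ (Fin m)))
    (hb : ∀ i, (b i).rOut ≤ 1) (hb0 : Tendsto (fun i => (b i).rOut) atTop (𝓝 0)) :
    Tendsto (fun i => ∫ x, (convolution ((b i).normed volume) h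
      (ContinuousLinearMap.lsmul ℝ ℝ) volume x) • F x) atTop (𝓝 (∫ x, h x • F x)) := by
  obtain ⟨C, hC⟩ := hs.exists_bound_of_continuous hc
  obtain ⟨R, hR⟩ := hs.isCompact.isBounded.subset_closedBall 0
  have hle : ∀ i x ε, 0 ≤ ε → (∀ y ∈ ball x (b i).rOut, ‖h y‖ ≤ ε) →
      ‖convolution ((b i).normed volume) h (ContinuousLinearMap.lsmul ℝ ℝ) volume x‖ ≤ ε := by
    intro i x ε hε hy
    have := dist_convolution_le (μ := volume) (f := (b i).normed volume) (g := h) (x₀ := x)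
      (R := (b i).rOut) (z₀ := (0:ℝ)) hε (b i).support_normed_eq.subset (b i).nonneg_normed
      (b i).integral_normed hc.aestronglyMeasurable (by simpa using hy)
    simpa using this
  have hC0 : 0 ≤ C := (norm_nonneg _).trans (hC 0)
  refine tendsto_integral_of_dominated_convergence
    (fun x => (closedBall (0 : EuclideanSpace ℝ (Fin m)) (R+1)).indicator (fun x => C * ‖F x‖) x)
    ?_ ?_ ?_ ?_
  · intro i
    refine AEStronglyMeasurable.smul (𝕜 := ℝ) ?_ hF.aestronglyMeasurable
    refine Continuous.aestronglyMeasurable ?_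
    exact (b i).hasCompactSupport_normed.continuous_convolution_left _
      (b i).continuous_normed hc.locallyIntegrable
  · rw [integrable_indicator_iff measurableSet_closedBall]
    exact ((hF.integrableOn_isCompact (isCompact_closedBall _ _)).norm).const_mul C
  · intro i
    refine Eventually.of_forall fun x => ?_
    by_cases hx : x ∈ closedBall (0 : EuclideanSpace ℝ (Fin m)) (R+1)
    · rw [Set.indicator_of_mem hx, norm_smul]
      gcongr
      exact hle i x C hC0 (fun y _ => hC y)
    · rw [Set.indicator_of_notMem hx]
      have : ‖convolution ((b i).normed volume) h (ContinuousLinearMap.lsmul ℝ ℝ) volume x‖ ≤ 0 := by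
        refine hle i x 0 le_rfl fun y hy => ?_
        have : y ∉ tsupport h := by
          intro hy2
          have h1 := hR hy2
          simp only [mem_closedBall, dist_zero_right, mem_ball, not_le] at h1 hx hy
          have h2 := hb i
          have : ‖x‖ ≤ ‖y‖ + dist y x := by
            rw [dist_comm, dist_eq_norm]
            calc ‖x‖ = ‖y + (x - y)‖ := by congr 1; abel
              _ ≤ _ := norm_add_le _ _
          linarith
        rw [image_eq_zero_of_notMem_tsupport this]; simp
      rw [norm_smul, le_antisymm this (norm_nonneg _), zero_mul]
  · refine Eventually.of_forall fun x => ?_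
    exact (ContDiffBump.convolution_tendsto_right_of_continuous hb0 hc x).smul_const _

lemma aux_wd_real {m : ℕ} (f g : EuclideanSpace ℝ (Fin m) → ℂ) (hf : LocallyIntegrable f volume)
    (hg : LocallyIntegrable g volume) (s : Fin m) (hw : IsWeakDeriv 1 (fun _ => s) f g)
    (φ : EuclideanSpace ℝ (Fin m) → ℝ) (hφ : ContDiff ℝ 1 φ) (hs : HasCompactSupport φ) :
    ∫ x, (fderiv ℝ φ x (EuclideanSpace.single s 1)) • f x = - ∫ x, φ x • g x := by
  let b : ℕ → ContDiffBump (0 : EuclideanSpace ℝ (Fin m)) := fun i =>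
    ⟨1 / (i + 1) / 2, 1 / (i + 1), by positivity, by
      have : (0:ℝ) < 1 / (i + 1) := by positivity
      linarith⟩
  have hb0 : Tendsto (fun i => (b i).rOut) atTop (𝓝 0) := tendsto_one_div_add_atTop_nhds_zero_nat
  have hb : ∀ i, (b i).rOut ≤ 1 := by
    intro i
    show (1:ℝ) / (i + 1) ≤ 1
    rw [div_le_one (by positivity)]
    have : (0:ℝ) ≤ i := by positivity
    linarith
  have hd : Continuous (fun x => fderiv ℝ φ x (EuclideanSpace.single s 1)) :=
    (hφ.continuous_fderiv (by norm_num)).clm_apply continuous_const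
  have hds : HasCompactSupport (fun x => fderiv ℝ φ x (EuclideanSpace.single s 1)) :=
    hs.fderiv_apply (𝕜 := ℝ) _
  have T1 := aux_moll f hf _ hd hds b hb hb0
  have T2 := (aux_moll g hg φ hφ.continuous hs b hb hb0).neg
  refine tendsto_nhds_unique (T1.congr fun i => ?_) T2
  have hl : LocallyIntegrable ((b i).normed volume) volume := (b i).continuous_normed.locallyIntegrable
  have := hw (convolution ((b i).normed volume) φ (ContinuousLinearMap.lsmul ℝ ℝ) volume)
    ((b i).hasCompactSupport_normed.contDiff_convolution_left _ ((b i).contDiff_normed)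
      hφ.continuous.locallyIntegrable)
    (HasCompactSupport.convolution _ (b i).hasCompactSupport_normed hs)
  simp only [pow_one, neg_smul, one_smul] at this
  rw [← this]
  refine integral_congr_ae (Eventually.of_forall fun x => ?_)
  simp only [mpd, iteratedFDeriv_one_apply]
  rw [(hs.hasFDerivAt_convolution_right _ hl hφ x).fderiv,
    convolution_precompR_apply _ hl (hs.fderiv (𝕜 := ℝ)) (hφ.continuous_fderiv (by norm_num))]

lemma aux_wd_complex {m : ℕ} (f g : EuclideanSpace ℝ (Fin m) → ℂ) (hf : LocallyIntegrable f volume)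
    (hg : LocallyIntegrable g volume) (s : Fin m) (hw : IsWeakDeriv 1 (fun _ => s) f g)
    (φ : EuclideanSpace ℝ (Fin m) → ℂ) (hφ : ContDiff ℝ 1 φ) (hs : HasCompactSupport φ) :
    ∫ x, (fderiv ℝ φ x (EuclideanSpace.single s 1)) * f x = - ∫ x, φ x * g x := by
  have key : ∀ (h : EuclideanSpace ℝ (Fin m) → ℂ) (F : EuclideanSpace ℝ (Fin m) → ℂ),
      Continuous h → HasCompactSupport h → LocallyIntegrable F volume →
      ∫ x, h x * F x = (∫ x, (h x).re • F x) + Complex.I * ∫ x, (h x).im • F x := by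
    intro h F h1 h2 h3
    have h2r : HasCompactSupport (fun x => (h x).re) := h2.comp_left (g := Complex.re) rfl
    have h2i : HasCompactSupport (fun x => (h x).im) := h2.comp_left (g := Complex.im) rfl
    rw [← integral_const_mul, ← integral_add]
    · refine integral_congr_ae (Eventually.of_forall fun x => ?_)
      simp only [Complex.real_smul]
      conv_lhs => rw [← Complex.re_add_im (h x)]
      ring
    · exact h3.integrable_smul_left_of_hasCompactSupport (Complex.continuous_re.comp h1) h2r
    · exact (h3.integrable_smul_left_of_hasCompactSupport (Complex.continuous_im.comp h1) h2i).const_mul _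
  rw [key _ f ((hφ.continuous_fderiv (by norm_num)).clm_apply continuous_const)
    (hs.fderiv_apply (𝕜 := ℝ) _) hf, key _ g hφ.continuous hs hg]
  have hr := aux_wd_real f g hf hg s hw (fun x => (φ x).re)
    (Complex.reCLM.contDiff.comp hφ) (hs.comp_left (g := Complex.re) rfl)
  have hi := aux_wd_real f g hf hg s hw (fun x => (φ x).im)
    (Complex.imCLM.contDiff.comp hφ) (hs.comp_left (g := Complex.im) rfl)
  have er : ∀ x v, fderiv ℝ (fun x => (φ x).re) x v = (fderiv ℝ φ x v).re := by
    intro x v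
    have := (Complex.reCLM.hasFDerivAt.comp x (hφ.differentiable (by norm_num) x).hasFDerivAt).fderiv
    exact congrArg (fun L => L v) this
  have ei : ∀ x v, fderiv ℝ (fun x => (φ x).im) x v = (fderiv ℝ φ x v).im := by
    intro x v
    have := (Complex.imCLM.hasFDerivAt.comp x (hφ.differentiable (by norm_num) x).hasFDerivAt).fderiv
    exact congrArg (fun L => L v) this
  simp only [er] at hr
  simp only [ei] at hi
  rw [hr, hi]; ring

lemma aux_wd_full {m : ℕ} (f g : EuclideanSpace ℝ (Fin m) → ℂ) (hf : LocallyIntegrable f volume)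
    (hg : LocallyIntegrable g volume) (s : Fin m) (hw : IsWeakDeriv 1 (fun _ => s) f g)
    (φ : EuclideanSpace ℝ (Fin m) → ℂ) (hφ : ContDiff ℝ 1 φ)
    (i1 : Integrable (fun x => φ x * f x)) (i2 : Integrable (fun x => φ x * g x))
    (i3 : Integrable (fun x => fderiv ℝ φ x (EuclideanSpace.single s 1) * f x)) :
    ∫ x, (fderiv ℝ φ x (EuclideanSpace.single s 1)) * f x = - ∫ x, φ x * g x := by
  let b : ContDiffBump (0 : EuclideanSpace ℝ (Fin m)) := ⟨1, 2, by norm_num, by norm_num⟩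
  have hbC : ContDiff ℝ 1 b := b.contDiff
  obtain ⟨C, hC⟩ := (b.hasCompactSupport.fderiv_apply (𝕜 := ℝ) (EuclideanSpace.single s 1)
    ).exists_bound_of_continuous
    ((hbC.continuous_fderiv (by norm_num)).clm_apply continuous_const)
  let c : ℕ → ℝ := fun i => 1 / (i + 1)
  have hc0 : ∀ i, 0 < c i := fun i => by simp only [c]; positivity
  have hct : Tendsto c atTop (𝓝 0) := tendsto_one_div_add_atTop_nhds_zero_nat
  let χ : ℕ → EuclideanSpace ℝ (Fin m) → ℝ := fun i x => b (c i • x)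
  have hχ : ∀ i, ContDiff ℝ 1 (χ i) := fun i => hbC.comp (contDiff_const_smul _)
  have hχs : ∀ i, HasCompactSupport (χ i) := fun i => b.hasCompactSupport.comp_smul (hc0 i).ne'
  have hχ' : ∀ i x v, fderiv ℝ (χ i) x v = c i * fderiv ℝ b (c i • x) v := by
    intro i x v
    have h1 : HasFDerivAt (fun x : EuclideanSpace ℝ (Fin m) => c i • x)
      (c i • ContinuousLinearMap.id ℝ (EuclideanSpace ℝ (Fin m))) x := (c i • ContinuousLinearMap.id ℝ (EuclideanSpace ℝ (Fin m))).hasFDerivAt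
    have h2 := ((hbC.differentiable (by norm_num) (c i • x)).hasFDerivAt.comp x h1).fderiv
    have h3 := congrArg (fun L => L v) h2
    simp at h3
    exact h3
  have hχ1 : ∀ i x, ‖χ i x‖ ≤ 1 := fun i x => by
    rw [Real.norm_of_nonneg b.nonneg]; exact b.le_one
  have hχt : ∀ x, Tendsto (fun i => χ i x) atTop (𝓝 1) := by
    intro x
    have h1 : Tendsto (fun i => c i • x) atTop (𝓝 0) := by simpa using hct.smul_const x
    have h2 := (hbC.continuous.tendsto 0).comp h1
    have h3 : b 0 = 1 := b.one_of_mem_closedBall (by simp [b])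
    rwa [h3] at h2
  have heq : ∀ i, (∫ x, (χ i x : ℂ) * (fderiv ℝ φ x (EuclideanSpace.single s 1) * f x)) +
      (∫ x, ((fderiv ℝ (χ i) x (EuclideanSpace.single s 1) : ℝ) : ℂ) * (φ x * f x))
      = - ∫ x, (χ i x : ℂ) * (φ x * g x) := by
    intro i
    have h1 := aux_wd_complex f g hf hg s hw (fun x => χ i x • φ x) ((hχ i).smul hφ)
      ((hχs i).smul_right)
    have h2 : ∫ x, (χ i x : ℂ) * (φ x * g x) = ∫ x, χ i x • φ x * g x := by
      refine integral_congr_ae (Eventually.of_forall fun x => ?_)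
      simp [mul_assoc]
    rw [h2, ← h1, ← integral_add]
    · refine integral_congr_ae (Eventually.of_forall fun x => ?_)
      have := (((hχ i).differentiable (by norm_num) x).hasFDerivAt.smul
        (hφ.differentiable (by norm_num) x).hasFDerivAt).fderiv
      have h3 := congrArg (fun L => L (EuclideanSpace.single s 1)) this
      simp only [Pi.smul_def', add_apply, smul_apply,
        ContinuousLinearMap.smulRight_apply, Complex.real_smul] at h3 ⊢
      rw [h3]; ring
    · refine i3.bdd_mul (c := 1) ?_ (Eventually.of_forall fun x => ?_)
      · exact (Complex.continuous_ofReal.comp (hχ i).continuous).aestronglyMeasurable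
      · simpa using hχ1 i x
    · refine i1.bdd_mul (c := c i * C) ?_ (Eventually.of_forall fun x => ?_)
      · exact (Complex.continuous_ofReal.comp (((hχ i).continuous_fderiv (by norm_num)).clm_apply
          continuous_const)).aestronglyMeasurable
      · rw [Complex.norm_real, hχ', norm_mul, Real.norm_of_nonneg (hc0 i).le]
        exact mul_le_mul_of_nonneg_left (hC _) (hc0 i).le
  have lim1 : ∀ F : EuclideanSpace ℝ (Fin m) → ℂ, Integrable F →
      Tendsto (fun i => ∫ x, (χ i x : ℂ) * F x) atTop (𝓝 (∫ x, F x)) := by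
    intro F hF
    refine tendsto_integral_of_dominated_convergence (fun x => ‖F x‖) ?_ hF.norm ?_ ?_
    · intro i
      exact (Complex.continuous_ofReal.comp (hχ i).continuous).aestronglyMeasurable.mul hF.1
    · intro i
      refine Eventually.of_forall fun x => ?_
      rw [norm_mul, Complex.norm_real]
      exact mul_le_of_le_one_left (norm_nonneg _) (hχ1 i x)
    · refine Eventually.of_forall fun x => ?_
      have := ((Complex.continuous_ofReal.tendsto 1).comp (hχt x)).mul_const (F x)
      simpa using this
  have lim2 : Tendsto (fun i => ∫ x, ((fderiv ℝ (χ i) x (EuclideanSpace.single s 1) : ℝ) : ℂ) *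
      (φ x * f x)) atTop (𝓝 0) := by
    have : Tendsto (fun i => c i * (C * ∫ x, ‖φ x * f x‖)) atTop (𝓝 0) := by
      simpa using hct.mul_const (C * ∫ x, ‖φ x * f x‖)
    refine squeeze_zero_norm (fun i => ?_) this
    rw [← mul_assoc, ← integral_const_mul]
    refine norm_integral_le_of_norm_le (i1.norm.const_mul _) (Eventually.of_forall fun x => ?_)
    rw [norm_mul, Complex.norm_real, hχ', norm_mul, Real.norm_of_nonneg (hc0 i).le]
    gcongr
    exact hC _
  have L1 := (lim1 _ i3).add lim2
  have L2 := (lim1 _ i2).neg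
  rw [add_zero] at L1
  exact tendsto_nhds_unique (L1.congr heq) L2

/-- auxiliary: the embedding as a continuous linear map -/
def upL (n : ℕ) : EuclideanSpace ℝ (Fin (n - 1)) →L[ℝ] EuclideanSpace ℝ (Fin n) :=
  LinearMap.toContinuousLinearMap
    { toFun := fun z => toUp z 0
      map_add' := by
        intro x y; ext i; simp only [toUp, WithLp.equiv_symm_apply, PiLp.add_apply]
        split_ifs <;> simp
      map_smul' := by
        intro c y; ext i; simp only [toUp, WithLp.equiv_symm_apply, PiLp.smul_apply]
        split_ifs <;> simp }

lemma upL_apply {n : ℕ} (z : EuclideanSpace ℝ (Fin (n - 1))) : upL n z = toUp z 0 := rfl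

lemma toUp_eq {n : ℕ} (hn : 0 < n) (z : EuclideanSpace ℝ (Fin (n - 1))) (t : ℝ) :
    toUp z t = upL n z + t • EuclideanSpace.single (lastIdx n hn) (1:ℝ) := by
  ext i
  rw [upL_apply]
  simp only [toUp, WithLp.equiv_symm_apply, PiLp.add_apply, PiLp.smul_apply, lastIdx,
    EuclideanSpace.single_apply, Fin.ext_iff]
  have := i.isLt
  split_ifs with h1 h2 h2
  · omega
  · simp
  · simp
  · omega

lemma upL_single {n : ℕ} (s : Fin (n - 1)) :
    upL n (EuclideanSpace.single s (1:ℝ)) = EuclideanSpace.single (finUp s) (1:ℝ) := by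
  ext i
  rw [upL_apply]
  have := s.isLt
  simp only [toUp, WithLp.equiv_symm_apply, finUp, EuclideanSpace.single_apply, Fin.ext_iff]
  split_ifs <;> first | rfl | omega

lemma toUp_smul {n : ℕ} (z : EuclideanSpace ℝ (Fin (n - 1))) (t c : ℝ) :
    c • toUp z t = (toUp (c • z) (c * t) : EuclideanSpace ℝ (Fin n)) := by
  ext i
  simp only [toUp, WithLp.equiv_symm_apply, PiLp.smul_apply]
  split_ifs <;> simp

lemma toUp_last {n : ℕ} (hn : 0 < n) (z : EuclideanSpace ℝ (Fin (n - 1))) (t : ℝ) :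
    (toUp z t : EuclideanSpace ℝ (Fin n)) (lastIdx n hn) = t := by
  simp [toUp, lastIdx]

lemma le_norm_toUp {n : ℕ} (hn : 0 < n) (z : EuclideanSpace ℝ (Fin (n - 1))) (t : ℝ) :
    t ≤ ‖(toUp z t : EuclideanSpace ℝ (Fin n))‖ := by
  have := PiLp.norm_apply_le (toUp z t : EuclideanSpace ℝ (Fin n)) (lastIdx n hn)
  rw [toUp_last] at this
  exact (le_abs_self t).trans this

lemma norm_le_norm_toUp {n : ℕ} (hn : 0 < n) (z : EuclideanSpace ℝ (Fin (n - 1))) (t : ℝ) :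
    ‖z‖ ≤ ‖(toUp z t : EuclideanSpace ℝ (Fin n))‖ := by
  have : ‖z‖ ^ 2 ≤ ‖(toUp z t : EuclideanSpace ℝ (Fin n))‖ ^ 2 := by
    rw [EuclideanSpace.norm_sq_eq, EuclideanSpace.norm_sq_eq]
    have hinj : Function.Injective (finUp : Fin (n-1) → Fin n) := by
      intro a b h; simp only [finUp, Fin.ext_iff] at h; exact Fin.ext h
    calc ∑ i, ‖z i‖ ^ 2
        = ∑ i, ‖(toUp z t : EuclideanSpace ℝ (Fin n)) (finUp i)‖ ^ 2 := by
          refine Finset.sum_congr rfl fun i _ => ?_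
          simp [toUp, finUp]
      _ = ∑ j ∈ Finset.univ.map ⟨finUp, hinj⟩, ‖(toUp z t : EuclideanSpace ℝ (Fin n)) j‖ ^ 2 := by
          rw [Finset.sum_map]; rfl
      _ ≤ _ := Finset.sum_le_sum_of_subset_of_nonneg (Finset.subset_univ _)
          (fun _ _ _ => by positivity)
  exact (sq_le_sq₀ (norm_nonneg _) (norm_nonneg _)).1 this

lemma toUp_ne {n : ℕ} (hn : 0 < n) (z : EuclideanSpace ℝ (Fin (n - 1))) {t : ℝ} (ht : 0 < t) :
    (toUp z t : EuclideanSpace ℝ (Fin n)) ≠ 0 := by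
  intro h
  have := le_norm_toUp hn z t
  rw [h, norm_zero] at this
  linarith

lemma aux_hom_bound {n : ℕ} (e : ℕ) (h : EuclideanSpace ℝ (Fin n) → ℂ)
    (hc : ContinuousOn h {x | x ≠ 0})
    (hh : ∀ l : ℝ, 0 < l → ∀ x, x ≠ 0 → h (l • x) = ((l:ℂ) ^ (-(e:ℤ))) * h x) :
    ∃ C : ℝ, 0 ≤ C ∧ ∀ x, x ≠ 0 → ‖h x‖ ≤ C * (‖x‖ ^ e)⁻¹ := by
  obtain ⟨C, hC⟩ := (isCompact_sphere (0 : EuclideanSpace ℝ (Fin n)) 1).exists_bound_of_continuousOn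
    (hc.mono (fun x hx => by
      intro h0; rw [h0] at hx; simp at hx))
  refine ⟨max C 0, le_max_right _ _, fun x hx => ?_⟩
  have hx0 : 0 < ‖x‖ := norm_pos_iff.2 hx
  have h1 : x = ‖x‖ • (‖x‖⁻¹ • x) := by rw [smul_smul, mul_inv_cancel₀ hx0.ne', one_smul]
  have h2 : ‖x‖⁻¹ • x ≠ 0 := smul_ne_zero (inv_ne_zero hx0.ne') hx
  have h3 := hC (‖x‖⁻¹ • x) (by simp [norm_smul, hx0.ne'])
  conv_lhs => rw [h1]
  rw [hh _ hx0 _ h2, norm_mul, mul_comm]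
  have h4 : ‖((‖x‖:ℂ)) ^ (-(e:ℤ))‖ = (‖x‖ ^ e)⁻¹ := by simp
  rw [h4]
  gcongr
  exact h3.trans (le_max_left _ _)

/-- auxiliary weight -/
def wgt (m : ℕ) (x y : EuclideanSpace ℝ (Fin m)) : ℝ := ((1 + ‖x - y‖) ^ m)⁻¹

lemma wgt_nonneg {m : ℕ} (x y : EuclideanSpace ℝ (Fin m)) : 0 ≤ wgt m x y := by
  unfold wgt; positivity

lemma aux_ker_bound {n : ℕ} (hn : 0 < n) (e : ℕ) (he : n - 1 ≤ e)
    (h : EuclideanSpace ℝ (Fin n) → ℂ)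
    (hc : ContinuousOn h {x | x ≠ 0})
    (hh : ∀ l : ℝ, 0 < l → ∀ x, x ≠ 0 → h (l • x) = ((l:ℂ) ^ (-(e:ℤ))) * h x)
    (t₀ : ℝ) (ht₀ : 0 < t₀) :
    ∃ C : ℝ, 0 ≤ C ∧ ∀ t, t₀ ≤ t → ∀ x y : EuclideanSpace ℝ (Fin (n-1)),
      ‖h (toUp (x - y) t)‖ ≤ C * wgt (n-1) x y := by
  obtain ⟨C, hC0, hC⟩ := aux_hom_bound e h hc hh
  set c := min 1 t₀ / 2 with hcdef
  have hc0 : 0 < c := by positivity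
  refine ⟨C * (c ^ e)⁻¹, by positivity, fun t ht x y => ?_⟩
  have hlow : c * (1 + ‖x - y‖) ≤ ‖(toUp (x - y) t : EuclideanSpace ℝ (Fin n))‖ := by
    have h1 := le_norm_toUp hn (x-y) t
    have h2 := norm_le_norm_toUp hn (x-y) t
    have h3 : c ≤ 1/2 := by rw [hcdef]; gcongr; exact min_le_left _ _
    have h4 : c ≤ t₀/2 := by rw [hcdef]; gcongr; exact min_le_right _ _
    nlinarith [norm_nonneg (x-y)]
  have := hC _ (toUp_ne hn (x-y) (ht₀.trans_le ht))
  refine this.trans ?_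
  rw [mul_assoc]
  refine mul_le_mul_of_nonneg_left ?_ hC0
  unfold wgt
  rw [← mul_inv]
  apply inv_anti₀ (by positivity)
  calc c ^ e * (1 + ‖x - y‖) ^ (n-1) ≤ c ^ e * (1 + ‖x - y‖) ^ e := by
        gcongr
        linarith [norm_nonneg (x-y)]
    _ = (c * (1 + ‖x - y‖)) ^ e := by rw [mul_pow]
    _ ≤ _ := by gcongr

lemma wgt_cont {m : ℕ} (x : EuclideanSpace ℝ (Fin m)) : Continuous (wgt m x) := by
  unfold wgt
  refine Continuous.inv₀ (by fun_prop) fun y => by positivity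

lemma aux_wgt_int {m : ℕ} (hm : 0 < m) (p : ℝ) (hp : 1 < p) (x : EuclideanSpace ℝ (Fin m))
    (f : EuclideanSpace ℝ (Fin m) → ℂ) (hf : MemLp f (ENNReal.ofReal p) volume) :
    Integrable (fun y => wgt m x y * ‖f y‖) := by
  have hpq := Real.HolderConjugate.conjExponent hp
  set q := p.conjExponent with hq
  have hq1 : 1 < q := hpq.symm.lt
  have hw : MemLp (wgt m x) (ENNReal.ofReal q) volume := by
    rw [← integrable_norm_rpow_iff (wgt_cont x).aestronglyMeasurable (by simp; linarith) (by simp)]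
    rw [ENNReal.toReal_ofReal (by linarith)]
    have h1 : Integrable (fun z : EuclideanSpace ℝ (Fin m) => (1 + ‖z‖) ^ (-(m * q))) volume := by
      apply integrable_one_add_norm
      simp only [finrank_euclideanSpace, Fintype.card_fin]
      have : (0:ℝ) < m := by exact_mod_cast hm
      nlinarith
    refine (h1.comp_sub_left x).congr (Eventually.of_forall fun y => ?_)
    have h2 : (0:ℝ) ≤ 1 + ‖x - y‖ := by positivity
    show (1 + ‖x - y‖) ^ (-(m * q)) = ‖wgt m x y‖ ^ q
    rw [Real.norm_of_nonneg (wgt_nonneg x y), wgt]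
    rw [Real.inv_rpow (by positivity), Real.rpow_neg h2, Real.rpow_mul h2, Real.rpow_natCast]
  have : ENNReal.HolderConjugate (ENNReal.ofReal q) (ENNReal.ofReal p) := by
    exact hpq.symm.ennrealOfReal
  exact hw.integrable_mul hf.norm

lemma aux_int {m : ℕ} (hm : 0 < m) (p : ℝ) (hp : 1 < p) (x : EuclideanSpace ℝ (Fin m))
    (f : EuclideanSpace ℝ (Fin m) → ℂ) (hf : MemLp f (ENNReal.ofReal p) volume)
    (h : EuclideanSpace ℝ (Fin m) → ℂ) (hc : Continuous h) (C : ℝ)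
    (hC : ∀ y, ‖h y‖ ≤ C * wgt m x y) : Integrable (fun y => h y * f y) := by
  refine ((aux_wgt_int hm p hp x f hf).const_mul C).mono'
    (hc.aestronglyMeasurable.mul hf.1) (Eventually.of_forall fun y => ?_)
  rw [norm_mul, ← mul_assoc]
  exact mul_le_mul_of_nonneg_right (hC y) (norm_nonneg _)

lemma isOpen_ne0 {n : ℕ} : IsOpen {x : EuclideanSpace ℝ (Fin n) | x ≠ 0} := isOpen_ne

lemma pd_cont {n : ℕ} (G : EuclideanSpace ℝ (Fin n) → ℂ) (hG : ContDiffOn ℝ 1 G {x | x ≠ 0})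
    (j : Fin n) : ContinuousOn (pd j G) {x | x ≠ 0} := by
  unfold pd
  exact (hG.continuousOn_fderiv_of_isOpen isOpen_ne0 (by norm_num)).clm_apply continuousOn_const

lemma diffAt {n : ℕ} {G : EuclideanSpace ℝ (Fin n) → ℂ} (hG : ContDiffOn ℝ 1 G {x | x ≠ 0})
    {x : EuclideanSpace ℝ (Fin n)} (hx : x ≠ 0) : DifferentiableAt ℝ G x :=
  (hG.contDiffAt (isOpen_ne0.mem_nhds hx)).differentiableAt (by norm_num)

lemma pd_hom {n : ℕ} (G : EuclideanSpace ℝ (Fin n) → ℂ) (hG : ContDiffOn ℝ 1 G {x | x ≠ 0})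
    (hh : ∀ l : ℝ, 0 < l → ∀ x, x ≠ 0 → G (l • x) = ((l:ℂ) ^ ((1:ℤ)-(n:ℤ))) * G x) (j : Fin n) :
    ∀ l : ℝ, 0 < l → ∀ x, x ≠ 0 → pd j G (l • x) = ((l:ℂ) ^ (-(n:ℤ))) * pd j G x := by
  intro l hl x hx
  have hlx : l • x ≠ 0 := smul_ne_zero hl.ne' hx
  have h1 : HasFDerivAt (fun x : EuclideanSpace ℝ (Fin n) => l • x)
      (l • ContinuousLinearMap.id ℝ (EuclideanSpace ℝ (Fin n))) x :=
    (l • ContinuousLinearMap.id ℝ (EuclideanSpace ℝ (Fin n))).hasFDerivAt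
  have h2 : HasFDerivAt (fun x => G (l • x)) _ x := (diffAt hG hlx).hasFDerivAt.comp x h1
  have h3 := (diffAt hG hx).hasFDerivAt.const_mul ((l:ℂ) ^ ((1:ℤ)-(n:ℤ)))
  have h4 : (fun x => G (l • x)) =ᶠ[𝓝 x] fun x => ((l:ℂ) ^ ((1:ℤ)-(n:ℤ))) * G x := by
    filter_upwards [isOpen_ne0.mem_nhds hx] with y hy using hh l hl y hy
  have h5 := (h2.congr_of_eventuallyEq h4.symm).unique h3
  have h6 := congrArg (fun L => L (EuclideanSpace.single j (1:ℝ))) h5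
  simp only [ContinuousLinearMap.comp_apply, smul_apply, ContinuousLinearMap.id_apply,
    map_smul, Complex.real_smul, smul_eq_mul] at h6
  have hl' : (l:ℂ) ≠ 0 := by exact_mod_cast hl.ne'
  unfold pd
  have h7 : (l:ℂ) ^ ((1:ℤ)-(n:ℤ)) = l * (l:ℂ) ^ (-(n:ℤ)) := by
    rw [sub_eq_add_neg, zpow_add₀ hl', zpow_one]
  rw [h7, mul_assoc] at h6
  exact mul_left_cancel₀ hl' h6

lemma ker_contDiff {n : ℕ} (hn : 0 < n) (G : EuclideanSpace ℝ (Fin n) → ℂ)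
    (hG : ContDiffOn ℝ 1 G {x | x ≠ 0}) (x : EuclideanSpace ℝ (Fin (n-1))) {t : ℝ} (ht : 0 < t) :
    ContDiff ℝ 1 (fun y => G (toUp (x - y) t)) := by
  simp only [toUp_eq hn]
  refine hG.comp_contDiff (by fun_prop) fun y => ?_
  have := toUp_ne hn (x - y) ht
  rwa [toUp_eq hn] at this

lemma ker_cont {n : ℕ} (hn : 0 < n) (h : EuclideanSpace ℝ (Fin n) → ℂ)
    (hc : ContinuousOn h {x | x ≠ 0}) (x : EuclideanSpace ℝ (Fin (n-1))) {t : ℝ} (ht : 0 < t) :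
    Continuous (fun y => h (toUp (x - y) t)) := by
  simp only [toUp_eq hn]
  refine hc.comp_continuous (by fun_prop) fun y => ?_
  have := toUp_ne hn (x - y) ht
  rwa [toUp_eq hn] at this

lemma ker_fderiv {n : ℕ} (hn : 0 < n) (G : EuclideanSpace ℝ (Fin n) → ℂ)
    (hG : ContDiffOn ℝ 1 G {x | x ≠ 0}) (x y : EuclideanSpace ℝ (Fin (n-1))) {t : ℝ} (ht : 0 < t)
    (s : Fin (n-1)) :
    fderiv ℝ (fun y => G (toUp (x - y) t)) y (EuclideanSpace.single s (1:ℝ))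
      = - pd (finUp s) G (toUp (x - y) t) := by
  have hne := toUp_ne hn (x - y) ht
  simp only [toUp_eq hn] at hne ⊢
  have h1 : HasFDerivAt (fun y => upL n (x - y) + t • EuclideanSpace.single (lastIdx n hn) (1:ℝ))
      (-(upL n)) y := by
    simp only [map_sub]
    have := (((upL n).hasFDerivAt (x := y)).const_sub (upL n x)).add_const
      (t • EuclideanSpace.single (lastIdx n hn) (1:ℝ))
    exact this
  have h2 : HasFDerivAt (fun y => G (upL n (x - y) + t • EuclideanSpace.single (lastIdx n hn) (1:ℝ)))
    _ y := (diffAt hG hne).hasFDerivAt.comp y h1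
  rw [h2.fderiv]
  simp [pd, upL_single]

lemma ker_deriv {n : ℕ} (hn : 0 < n) (G : EuclideanSpace ℝ (Fin n) → ℂ)
    (hG : ContDiffOn ℝ 1 G {x | x ≠ 0}) (z : EuclideanSpace ℝ (Fin (n-1))) {t : ℝ} (ht : 0 < t) :
    HasDerivAt (fun τ => G (toUp z τ)) (pd (lastIdx n hn) G (toUp z t)) t := by
  have hne := toUp_ne hn z ht
  simp only [toUp_eq hn] at hne ⊢
  have h1 : HasDerivAt (fun τ : ℝ => upL n z + τ • EuclideanSpace.single (lastIdx n hn) (1:ℝ))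
      (EuclideanSpace.single (lastIdx n hn) (1:ℝ)) t := by
    have := ((hasDerivAt_id t).smul_const (EuclideanSpace.single (lastIdx n hn) (1:ℝ))).const_add
      (upL n z)
    simpa using this
  exact (diffAt hG hne).hasFDerivAt.comp_hasDerivAt t h1

lemma deg_eq {n : ℕ} (hn : 0 < n) : ((1:ℤ)-(n:ℤ)) = -((n - 1 : ℕ) : ℤ) := by
  omega

/-- Main scalar lemma. -/
lemma ker_main {n : ℕ} (hn : 2 ≤ n) (G : EuclideanSpace ℝ (Fin n) → ℂ)
    (hG : ContDiffOn ℝ 1 G {x | x ≠ 0})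
    (hh : ∀ l : ℝ, 0 < l → ∀ x, x ≠ 0 → G (l • x) = ((l:ℂ) ^ ((1:ℤ)-(n:ℤ))) * G x)
    (p : ℝ) (hp : 1 < p) (f : EuclideanSpace ℝ (Fin (n-1)) → ℂ)
    (hf : MemLp f (ENNReal.ofReal p) volume) (x : EuclideanSpace ℝ (Fin (n-1)))
    (t : ℝ) (ht : 0 < t) :
    Integrable (fun y => G (toUp (x - y) t) * f y) ∧
    (∀ j, Integrable (fun y => pd j G (toUp (x - y) t) * f y)) ∧
    HasDerivAt (fun τ => ∫ y, G (toUp (x - y) τ) * f y)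
      (∫ y, pd (lastIdx n (by omega)) G (toUp (x - y) t) * f y) t ∧
    (∀ (s : Fin (n-1)) (g : EuclideanSpace ℝ (Fin (n-1)) → ℂ),
      MemLp g (ENNReal.ofReal p) volume → IsWeakDeriv 1 (fun _ => s) f g →
      ∫ y, G (toUp (x - y) t) * g y = ∫ y, pd (finUp s) G (toUp (x - y) t) * f y) := by
  have hn0 : 0 < n := by omega
  have hm : 0 < n - 1 := by omega
  have hp1 : (1 : ℝ≥0∞) ≤ ENNReal.ofReal p := by
    rw [← ENNReal.ofReal_one]; exact ENNReal.ofReal_le_ofReal hp.le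
  obtain ⟨C, hC0, hC⟩ := aux_ker_bound hn0 (n-1) le_rfl G hG.continuousOn
    (by rw [← deg_eq hn0]; exact hh) (t/2) (by positivity)
  have hI : ∀ g : EuclideanSpace ℝ (Fin (n-1)) → ℂ, MemLp g (ENNReal.ofReal p) volume →
      Integrable (fun y => G (toUp (x - y) t) * g y) := fun g hg =>
    aux_int hm p hp x g hg _ (ker_cont hn0 G hG.continuousOn x ht) C (hC t (by linarith) x)
  have hI' : ∀ j, Integrable (fun y => pd j G (toUp (x - y) t) * f y) := fun j => by
    obtain ⟨C, hC0, hC⟩ := aux_ker_bound hn0 n (by omega) (pd j G) (pd_cont G hG j)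
      (pd_hom G hG hh j) (t/2) (by positivity)
    exact aux_int hm p hp x f hf _ (ker_cont hn0 _ (pd_cont G hG j) x ht) C (hC t (by linarith) x)
  refine ⟨hI f hf, hI', ?_, ?_⟩
  · obtain ⟨D, hD0, hD⟩ := aux_ker_bound hn0 n (by omega) (pd (lastIdx n hn0) G) (pd_cont G hG _)
      (pd_hom G hG hh _) (t/2) (by positivity)
    refine (hasDerivAt_integral_of_dominated_loc_of_deriv_le (s := Set.Ioi (t/2))
      (F := fun τ y => G (toUp (x - y) τ) * f y)
      (F' := fun τ y => pd (lastIdx n hn0) G (toUp (x - y) τ) * f y)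
      (bound := fun y => D * (wgt (n-1) x y * ‖f y‖))
      (Ioi_mem_nhds (by linarith)) ?_ (hI f hf) (hI' _).1 ?_
      ((aux_wgt_int hm p hp x f hf).const_mul D) ?_).2
    · filter_upwards [Ioi_mem_nhds ht] with τ hτ
      exact (ker_cont hn0 G hG.continuousOn x hτ).aestronglyMeasurable.mul hf.1
    · refine Eventually.of_forall fun y τ hτ => ?_
      rw [norm_mul, ← mul_assoc]
      exact mul_le_mul_of_nonneg_right (hD τ (le_of_lt hτ) x y) (norm_nonneg _)
    · refine Eventually.of_forall fun y τ hτ => ?_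
      exact (ker_deriv hn0 G hG (x - y) (lt_trans (by positivity) hτ)).mul_const _
  · intro s g hg hw
    have := aux_wd_full f g (hf.locallyIntegrable hp1) (hg.locallyIntegrable hp1) s hw
      (fun y => G (toUp (x - y) t)) (ker_contDiff hn0 G hG x ht) (hI f hf) (hI g hg)
      (by simp only [ker_fderiv hn0 G hG x _ ht, neg_mul]; exact (hI' _).neg)
    simp only [ker_fderiv hn0 G hG x _ ht, neg_mul, integral_neg, neg_inj] at this
    exact this.symm

lemma pd_contDiffOn {n : ℕ} {F : EuclideanSpace ℝ (Fin n) → ℂ}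
    (hF : ContDiffOn ℝ 2 F {x | x ≠ 0}) (r : Fin n) : ContDiffOn ℝ 1 (pd r F) {x | x ≠ 0} := by
  unfold pd
  exact (hF.fderiv_of_isOpen isOpen_ne0 (by norm_num)).clm_apply contDiffOn_const

lemma pd_symm {n : ℕ} {F : EuclideanSpace ℝ (Fin n) → ℂ}
    (hF : ContDiffOn ℝ 2 F {x | x ≠ 0}) (i j : Fin n) {x : EuclideanSpace ℝ (Fin n)} (hx : x ≠ 0) :
    pd i (pd j F) x = pd j (pd i F) x := by
  have hc := hF.contDiffAt (isOpen_ne0.mem_nhds hx)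
  have hs := hc.isSymmSndFDerivAt (by simp)
  have hd : DifferentiableAt ℝ (fderiv ℝ F) x :=
    (hc.fderiv_right (m := 1) (by norm_num)).differentiableAt (by norm_num)
  have key : ∀ i j, pd i (pd j F) x = (fderiv ℝ (fderiv ℝ F) x (EuclideanSpace.single i 1))
      (EuclideanSpace.single j 1) := by
    intro i j
    have h1 : HasFDerivAt (pd j F) _ x :=
      hd.hasFDerivAt.clm_apply (hasFDerivAt_const (EuclideanSpace.single j (1:ℝ)) x)
    unfold pd at h1 ⊢
    rw [h1.fderiv]
    simp
  rw [key, key, hs]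

lemma sum_split {n : ℕ} (hn : 0 < n) (h : Fin n → ℂ) :
    ∑ s, h s = (∑ s : Fin (n-1), h (finUp s)) + h (lastIdx n hn) := by
  obtain ⟨m, rfl⟩ : ∃ m, n = m + 1 := ⟨n - 1, by omega⟩
  rw [Fin.sum_univ_castSucc]
  rfl

lemma aux_div_zero {n M : ℕ} (hn : 0 < n)
    (A : Fin n → Fin n → Fin M → ℂ)
    (G : Fin n → Fin M → EuclideanSpace ℝ (Fin n) → ℂ)
    (hG : ∀ r β, ContDiffOn ℝ 1 (G r β) {x | x ≠ 0})
    (k : EuclideanSpace ℝ (Fin n) → ℂ)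
    (hkhom : ∀ (l : ℝ), 0 < l → ∀ x : EuclideanSpace ℝ (Fin n), x ≠ 0 →
        k (l • x) = ((l : ℂ) ^ (-(n : ℤ))) * k x)
    (hk : ∀ x : EuclideanSpace ℝ (Fin n), x ≠ 0 → ∀ (s : Fin n),
      (∑ r, ∑ β, A r s β * G r β x) = ((x s : ℝ) : ℂ) * k x)
    (x : EuclideanSpace ℝ (Fin n)) (hx0 : x ≠ 0) (hx : x (lastIdx n hn) ≠ 0) :
    ∑ s, ∑ r, ∑ β, A r s β * pd s (G r β) x = 0 := by
  have hV : ∀ s, HasFDerivAt (fun y => ∑ r, ∑ β, A r s β * G r β y)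
      (∑ r, ∑ β, A r s β • fderiv ℝ (G r β) x) x := by
    intro s
    refine HasFDerivAt.fun_sum fun r _ => HasFDerivAt.fun_sum fun β _ => ?_
    exact (diffAt (hG r β) hx0).hasFDerivAt.const_mul _
  have hcoord : ∀ s : Fin n, HasFDerivAt (fun y : EuclideanSpace ℝ (Fin n) => ((y s : ℝ) : ℂ))
      (Complex.ofRealCLM.comp (EuclideanSpace.proj (𝕜 := ℝ) s)) x := fun s =>
    (Complex.ofRealCLM.comp (EuclideanSpace.proj (𝕜 := ℝ) s)).hasFDerivAt
  have hxc : ((x (lastIdx n hn) : ℝ) : ℂ) ≠ 0 := by exact_mod_cast hx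
  have hkd : DifferentiableAt ℝ k x := by
    have h1 : DifferentiableAt ℝ (fun y : EuclideanSpace ℝ (Fin n) =>
        (((y (lastIdx n hn) : ℝ) : ℂ))⁻¹ * (∑ r, ∑ β, A r (lastIdx n hn) β * G r β y)) x :=
      ((hcoord _).differentiableAt.inv hxc).mul (hV _).differentiableAt
    refine h1.congr_of_eventuallyEq ?_
    have h2 : ∀ᶠ y in 𝓝 x, ((y (lastIdx n hn) : ℝ) : ℂ) ≠ 0 :=
      (hcoord (lastIdx n hn)).continuousAt.eventually_ne hxc
    filter_upwards [h2, isOpen_ne0.mem_nhds hx0] with y hy hy0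
    rw [hk y hy0, inv_mul_cancel_left₀ hy]
  have hK := hkd.hasFDerivAt
  set K := fderiv ℝ k x with hKdef
  have euler : K x = -(n:ℂ) * k x := by
    have h1 : HasDerivAt (fun l : ℝ => l • x) x 1 := by
      simpa using (hasDerivAt_id (1:ℝ)).smul_const x
    have h2 : HasDerivAt (fun l : ℝ => k (l • x)) (K x) 1 := by
      have hK' : HasFDerivAt k K ((1:ℝ) • x) := by rwa [one_smul]
      exact hK'.comp_hasDerivAt (1:ℝ) h1
    have h3 : HasDerivAt (fun l : ℝ => ((l : ℂ) ^ (-(n : ℤ))) * k x)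
        ((((-(n:ℤ) : ℤ) : ℂ) * ((1:ℝ):ℂ) ^ (-(n:ℤ) - 1)) * k x) 1 := by
      have := (hasDerivAt_zpow (-(n:ℤ)) ((1:ℝ):ℂ) (Or.inl (by simp))).comp_ofReal
      exact this.mul_const _
    have h4 : (fun l : ℝ => k (l • x)) =ᶠ[𝓝 1] fun l : ℝ => ((l : ℂ) ^ (-(n : ℤ))) * k x := by
      filter_upwards [Ioi_mem_nhds (zero_lt_one)] with l hl using hkhom l hl x hx0
    have h5 := (h2.congr_of_eventuallyEq h4.symm).unique h3
    rw [h5]; simp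
  have hpt : ∀ s, ∑ r, ∑ β, A r s β * pd s (G r β) x
      = k x + ((x s : ℝ) : ℂ) * K (EuclideanSpace.single s 1) := by
    intro s
    have h1 := (hcoord s).mul hK
    have h2 : (fun y => ∑ r, ∑ β, A r s β * G r β y) =ᶠ[𝓝 x]
        fun y : EuclideanSpace ℝ (Fin n) => ((y s : ℝ) : ℂ) * k y := by
      filter_upwards [isOpen_ne0.mem_nhds hx0] with y hy using hk y hy s
    have h3 := ((hV s).congr_of_eventuallyEq h2.symm).unique h1
    have h4 := congrArg (fun L => L (EuclideanSpace.single s (1:ℝ))) h3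
    simp [ContinuousLinearMap.sum_apply] at h4
    unfold pd
    rw [h4]; ring
  rw [Finset.sum_congr rfl fun s _ => hpt s, Finset.sum_add_distrib]
  have hx1 : ∑ s, x s • EuclideanSpace.single s (1:ℝ) = x := by
    ext i; simp [Pi.single_apply]
  have h6 : ∑ s, ((x s : ℝ) : ℂ) * K (EuclideanSpace.single s 1) = K x := by
    conv_rhs => rw [← hx1, map_sum]
    simp
  rw [h6, euler]
  simp

/-- The convolution identities: for `f ∈ L^p_1(ℝ^{n-1}; ℂ^M)` with weak
first-order derivatives `g`, (i)
`∂_t[(P_t*f)_γ] = -2 Σ_{s<n} Σ_{r,α,β} a^{βα}_{rs} ((Q^{(r)}_{γβ})_t * ∂_s f_α)`, and (ii)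
`∂_t[(Q^{(r)}_t * f)_γ] = (Q^{(n)}_t * ∂_r f)_γ` for `r < n`. Here `P = 2k(·,1)` and
`A r s β α` stands for `a^{βα}_{rs}`. -/
theorem statement16
    (n M : ℕ) (hn : 2 ≤ n) (hM : 1 ≤ M)
    (A : Fin n → Fin n → Fin M → Fin M → ℂ)
    (E : EuclideanSpace ℝ (Fin n) → Matrix (Fin M) (Fin M) ℂ)
    (hEreg : ∀ γ β : Fin M,
      ContDiffOn ℝ 2 (fun x => E x γ β) {x : EuclideanSpace ℝ (Fin n) | x ≠ 0})
    (hEhom : ∀ (γ β : Fin M) (r : Fin n) (l : ℝ), 0 < l →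
      ∀ x : EuclideanSpace ℝ (Fin n), x ≠ 0 →
        pd r (fun y => E y γ β) (l • x)
          = ((l : ℂ) ^ ((1 : ℤ) - (n : ℤ))) * pd r (fun y => E y γ β) x)
    (k : EuclideanSpace ℝ (Fin n) → Matrix (Fin M) (Fin M) ℂ)
    (hkcont : ∀ γ α : Fin M,
      ContinuousOn (fun x => k x γ α) {x : EuclideanSpace ℝ (Fin n) | x ≠ 0})
    (hkhom : ∀ (γ α : Fin M) (l : ℝ), 0 < l →
      ∀ x : EuclideanSpace ℝ (Fin n), x ≠ 0 →
        k (l • x) γ α = ((l : ℂ) ^ (-(n : ℤ))) * k x γ α)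
    (hk : ∀ x : EuclideanSpace ℝ (Fin n), x ≠ 0 → ∀ (s : Fin n) (γ α : Fin M),
      (∑ r, ∑ β, A r s β α * pd r (fun y => E y γ β) x) = ((x s : ℝ) : ℂ) * k x γ α)
    (p : ℝ) (hp : 1 < p)
    (f : EuclideanSpace ℝ (Fin (n - 1)) → Fin M → ℂ)
    (g : Fin (n - 1) → Fin M → EuclideanSpace ℝ (Fin (n - 1)) → ℂ)
    (hf : MemLp f (ENNReal.ofReal p) volume)
    (hg : ∀ (s : Fin (n - 1)) (α : Fin M),
      MemLp (g s α) (ENNReal.ofReal p) volume ∧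
        IsWeakDeriv 1 (fun _ => s) (fun y => f y α) (g s α)) :
    ∀ (t : ℝ), 0 < t → ∀ (γ : Fin M) (x' : EuclideanSpace ℝ (Fin (n - 1))),
      (deriv (fun τ : ℝ =>
          ∫ y' : EuclideanSpace ℝ (Fin (n - 1)), ∑ α,
            (((τ : ℂ) ^ ((1 : ℤ) - (n : ℤ))) *
              (2 * k (toUp (τ⁻¹ • (x' - y')) 1) γ α)) * f y' α) t
        = -2 * ∑ s : Fin (n - 1), ∑ r : Fin n, ∑ α : Fin M, ∑ β : Fin M,
            A r (finUp s) β α *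
              ∫ y' : EuclideanSpace ℝ (Fin (n - 1)),
                (((t : ℂ) ^ ((1 : ℤ) - (n : ℤ))) * Qker E r γ β (t⁻¹ • (x' - y')))
                  * g s α y') ∧
      (∀ r : Fin (n - 1),
        deriv (fun τ : ℝ =>
            ∫ y' : EuclideanSpace ℝ (Fin (n - 1)), ∑ α,
              (((τ : ℂ) ^ ((1 : ℤ) - (n : ℤ))) *
                Qker E (finUp r) γ α (τ⁻¹ • (x' - y'))) * f y' α) t
          = ∫ y' : EuclideanSpace ℝ (Fin (n - 1)), ∑ α,
              (((t : ℂ) ^ ((1 : ℤ) - (n : ℤ))) *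
                Qker E (lastIdx n (by omega)) γ α (t⁻¹ • (x' - y'))) * g r α y') := by
  intro t ht γ x'
  have hn0 : 0 < n := by omega
  have hGc : ∀ r γ β, ContDiffOn ℝ 1 (pd r (fun y => E y γ β)) {x | x ≠ 0} := fun r γ β =>
    pd_contDiffOn (hEreg γ β) r
  have hfα : ∀ α, MemLp (fun y => f y α) (ENNReal.ofReal p) volume := memLp_pi_iff.1 hf
  have hup : ∀ (τ : ℝ), 0 < τ → ∀ z : EuclideanSpace ℝ (Fin (n-1)),
      τ • (toUp (τ⁻¹ • z) 1 : EuclideanSpace ℝ (Fin n)) = toUp z τ := by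
    intro τ hτ z
    rw [toUp_smul, smul_smul, mul_inv_cancel₀ hτ.ne', one_smul, mul_one]
  have hQ : ∀ r γ β (τ : ℝ), 0 < τ → ∀ z,
      ((τ : ℂ) ^ ((1 : ℤ) - (n : ℤ))) * Qker E r γ β (τ⁻¹ • z)
        = pd r (fun y => E y γ β) (toUp z τ) := by
    intro r γ β τ hτ z
    rw [← hup τ hτ z, hEhom γ β r τ hτ _ (toUp_ne hn0 _ one_pos)]
    rfl
  have main := fun r β α => ker_main hn _ (hGc r γ β) (hEhom γ β r) p hp _ (hfα α) x'
  constructor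
  · have hP : ∀ α (τ : ℝ), 0 < τ → ∀ z : EuclideanSpace ℝ (Fin (n-1)),
        ((τ : ℂ) ^ ((1 : ℤ) - (n : ℤ))) * (2 * k (toUp (τ⁻¹ • z) 1) γ α)
        = ∑ r, ∑ β, 2 * A r (lastIdx n hn0) β α * pd r (fun y => E y γ β) (toUp z τ) := by
      intro α τ hτ z
      have h1 := hk (toUp z τ) (toUp_ne hn0 z hτ) (lastIdx n hn0) γ α
      rw [toUp_last] at h1
      have h2 := hkhom γ α τ hτ (toUp (τ⁻¹ • z) 1) (toUp_ne hn0 _ one_pos)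
      rw [hup τ hτ] at h2
      have hτ' : (τ:ℂ) ≠ 0 := by exact_mod_cast hτ.ne'
      simp only [mul_assoc, ← Finset.mul_sum]
      rw [h1, h2, sub_eq_add_neg, zpow_add₀ hτ', zpow_one]
      ring
    have hfun : (fun τ : ℝ => ∫ y' : EuclideanSpace ℝ (Fin (n - 1)), ∑ α,
            (((τ : ℂ) ^ ((1 : ℤ) - (n : ℤ))) *
              (2 * k (toUp (τ⁻¹ • (x' - y')) 1) γ α)) * f y' α) =ᶠ[𝓝 t]
        fun τ : ℝ => ∑ α, ∑ r, ∑ β, 2 * A r (lastIdx n hn0) β α *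
          ∫ y', pd r (fun y => E y γ β) (toUp (x' - y') τ) * f y' α := by
      filter_upwards [Ioi_mem_nhds ht] with τ hτ
      have hint := fun r β α => (main r β α τ hτ).1
      simp only [← integral_const_mul]
      rw [integral_congr_ae (Eventually.of_forall fun y' => Finset.sum_congr rfl fun α _ => by
        rw [hP α τ hτ])]
      simp only [Finset.sum_mul, mul_assoc]
      have hint2 : ∀ r β α, Integrable (fun y' => 2 * (A r (lastIdx n hn0) β α *
          (pd r (fun y => E y γ β) (toUp (x' - y') τ) * f y' α))) := fun r β α =>
        ((hint r β α).const_mul _).const_mul _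
      rw [integral_finsetSum _ fun α _ => integrable_finsetSum _ fun r _ =>
        integrable_finsetSum _ fun β _ => hint2 r β α]
      refine Finset.sum_congr rfl fun α _ => ?_
      rw [integral_finsetSum _ fun r _ => integrable_finsetSum _ fun β _ => hint2 r β α]
      refine Finset.sum_congr rfl fun r _ => ?_
      rw [integral_finsetSum _ fun β _ => hint2 r β α]
    rw [hfun.deriv_eq]
    have hD : HasDerivAt (fun τ : ℝ => ∑ α, ∑ r, ∑ β, 2 * A r (lastIdx n hn0) β α *
          ∫ y', pd r (fun y => E y γ β) (toUp (x' - y') τ) * f y' α)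
        (∑ α, ∑ r, ∑ β, 2 * A r (lastIdx n hn0) β α *
          ∫ y', pd (lastIdx n hn0) (pd r (fun y => E y γ β)) (toUp (x' - y') t) * f y' α) t :=
      HasDerivAt.fun_sum fun α _ => HasDerivAt.fun_sum fun r _ => HasDerivAt.fun_sum fun β _ =>
        ((main r β α t ht).2.2.1).const_mul _
    rw [hD.deriv]
    have hR : ∀ s r α β, ∫ y' : EuclideanSpace ℝ (Fin (n - 1)),
                (((t : ℂ) ^ ((1 : ℤ) - (n : ℤ))) * Qker E r γ β (t⁻¹ • (x' - y')))
                  * g s α y'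
        = ∫ y', pd (finUp s) (pd r (fun y => E y γ β)) (toUp (x' - y') t) * f y' α := by
      intro s r α β
      rw [← (main r β α t ht).2.2.2 s (g s α) (hg s α).1 (hg s α).2]
      simp only [hQ r γ β t ht]
    simp only [hR]
    set I : Fin n → Fin n → Fin M → Fin M → ℂ := fun s r β α =>
      ∫ y', pd s (pd r (fun y => E y γ β)) (toUp (x' - y') t) * f y' α with hI
    have hzero : ∀ α, ∑ s, ∑ r, ∑ β, A r s β α * I s r β α = 0 := by
      intro α
      have hint2 : ∀ s r β, Integrable (fun y' => A r s β α *
          (pd s (pd r (fun y => E y γ β)) (toUp (x' - y') t) * f y' α)) := fun s r β =>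
        ((main r β α t ht).2.1 s).const_mul _
      simp only [hI, ← integral_const_mul]
      have : ∀ s, ∑ r, ∑ β, ∫ y', A r s β α *
          (pd s (pd r (fun y => E y γ β)) (toUp (x' - y') t) * f y' α)
          = ∫ y', ∑ r, ∑ β, A r s β α *
          (pd s (pd r (fun y => E y γ β)) (toUp (x' - y') t) * f y' α) := by
        intro s
        rw [integral_finsetSum _ fun r _ => integrable_finsetSum _ fun β _ => hint2 s r β]
        refine Finset.sum_congr rfl fun r _ => ?_
        rw [integral_finsetSum _ fun β _ => hint2 s r β]
      simp only [this]
      rw [← integral_finsetSum _ fun s _ => integrable_finsetSum _ fun r _ =>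
        integrable_finsetSum _ fun β _ => hint2 s r β]
      rw [← integral_zero (EuclideanSpace ℝ (Fin (n-1))) ℂ]
      refine integral_congr_ae (Eventually.of_forall fun y' => ?_)
      simp only [← mul_assoc, ← Finset.sum_mul]
      have := aux_div_zero hn0 (fun r s β => A r s β α) (fun r β => pd r (fun y => E y γ β))
        (fun r β => hGc r γ β) (fun x => k x γ α) (hkhom γ α) (fun x hx s => hk x hx s γ α)
        (toUp (x' - y') t) (toUp_ne hn0 _ ht) (by rw [toUp_last]; exact ht.ne')
      rw [this, zero_mul]
    have hz2 : ∑ α, ((∑ s : Fin (n-1), ∑ r, ∑ β, A r (finUp s) β α * I (finUp s) r β α)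
        + ∑ r, ∑ β, A r (lastIdx n hn0) β α * I (lastIdx n hn0) r β α) = 0 := by
      refine Finset.sum_eq_zero fun α _ => ?_
      exact (sum_split hn0 (fun s => ∑ r, ∑ β, A r s β α * I s r β α)).symm.trans (hzero α)
    rw [Finset.sum_add_distrib] at hz2
    have e1 : ∑ s : Fin (n-1), ∑ r, ∑ α, ∑ β, A r (finUp s) β α * I (finUp s) r β α
        = ∑ α, ∑ s : Fin (n-1), ∑ r, ∑ β, A r (finUp s) β α * I (finUp s) r β α := by
      rw [Finset.sum_comm (s := (Finset.univ : Finset (Fin M)))]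
      refine Finset.sum_congr rfl fun s _ => ?_
      exact Finset.sum_comm
    have e2 : ∑ α, ∑ r, ∑ β, 2 * A r (lastIdx n hn0) β α * I (lastIdx n hn0) r β α
        = 2 * ∑ α, ∑ r, ∑ β, A r (lastIdx n hn0) β α * I (lastIdx n hn0) r β α := by
      simp only [Finset.mul_sum, mul_assoc]
    rw [e1]
    refine e2.trans ?_
    linear_combination 2 * hz2
  · intro r
    have hfun : (fun τ : ℝ => ∫ y' : EuclideanSpace ℝ (Fin (n - 1)), ∑ α,
              (((τ : ℂ) ^ ((1 : ℤ) - (n : ℤ))) *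
                Qker E (finUp r) γ α (τ⁻¹ • (x' - y'))) * f y' α) =ᶠ[𝓝 t]
        fun τ : ℝ => ∑ α,
          ∫ y', pd (finUp r) (fun y => E y γ α) (toUp (x' - y') τ) * f y' α := by
      filter_upwards [Ioi_mem_nhds ht] with τ hτ
      simp only [hQ _ _ _ τ hτ]
      rw [integral_finsetSum _ fun α _ => (main (finUp r) α α τ hτ).1]
    rw [hfun.deriv_eq]
    have hD : HasDerivAt (fun τ : ℝ => ∑ α,
          ∫ y', pd (finUp r) (fun y => E y γ α) (toUp (x' - y') τ) * f y' α)
        (∑ α, ∫ y', pd (lastIdx n hn0) (pd (finUp r) (fun y => E y γ α)) (toUp (x' - y') t)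
          * f y' α) t :=
      HasDerivAt.fun_sum fun α _ => (main (finUp r) α α t ht).2.2.1
    rw [hD.deriv]
    simp only [hQ _ _ _ t ht]
    rw [integral_finsetSum _ fun α _ => (ker_main hn _ (hGc (lastIdx n hn0) γ α)
      (hEhom γ α (lastIdx n hn0)) p hp _ (hg r α).1 x' t ht).1]
    refine Finset.sum_congr rfl fun α _ => ?_
    rw [(main (lastIdx n hn0) α α t ht).2.2.2 r (g r α) (hg r α).1 (hg r α).2]
    refine integral_congr_ae (Eventually.of_forall fun y' => ?_)
    simp only
    rw [pd_symm (hEreg γ α) _ _ (toUp_ne hn0 _ ht)]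

end
end

section
/- Let n ≥ 2 and let λ,μ ∈ ℝ satisfy μ > 0 and 2μ + λ > 0. For θ ∈ ℝ define the coefficient tensor A(θ) with entries a^{αβ}_{rs}(θ) := μ δ_{rs}δ_{αβ} + (λ+μ-θ) δ_{rα}δ_{sβ} + θ δ_{rβ}δ_{sα} for 1 ≤ α,β,r,s ≤ n (so that L_{A(θ)} is the Lamé operator Lu = μΔu + (λ+μ)∇div u for every θ). Let S(ξ) := [-(Σ_{r,s} ξ_rξ_s A_{rs}(θ))]^{-1} ∈ ℂ^{n×n} for ξ ∈ ℝⁿ∖{0}, where A_{rs}(θ) := (a^{αβ}_{rs}(θ))_{α,β} (this matrix S(ξ) does not depend on θ). Then the following two statements are equivalent: (1) for all s,s' ∈ {1,…,n}, all α,γ ∈ {1,…,n}, and all ξ ∈ ℝⁿ∖{0}, Σ_β [a^{βα}_{s's}(θ) - a^{βα}_{ss'}(θ)] S_{γβ}(ξ) + Σ_{r,β} ξ_r a^{βα}_{rs}(θ)(∂_{ξ_{s'}}S_{γβ})(ξ) - Σ_{r,β} ξ_r a^{βα}_{rs'}(θ)(∂_{ξ_s}S_{γβ})(ξ) = 0,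 and, in the case n = 2, additionally ∫_{S¹} Σ_{r,β}(a^{βα}_{rs}(θ)ξ_{s'} - a^{βα}_{rs'}(θ)ξ_s)(ξ_r S_{γβ}(ξ)) dσ(ξ) = 0 for all s,s',α,γ; (2) θ = μ(λ+μ)/(3μ+λ). -/
open MeasureTheory Filter Metric Real
open scoped ENNReal NNReal Topology

noncomputable section

def dl {n : ℕ} (i j : Fin n) : ℂ := if i = j then 1 else 0

lemma dl_comm {n : ℕ} (i j : Fin n) : dl i j = dl j i := by
  simp [dl, eq_comm]

lemma sum_dl {n : ℕ} (i : Fin n) (f : Fin n → ℂ) : ∑ j, dl i j * f j = f i := by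
  simp [dl]

lemma sum_dl' {n : ℕ} (i : Fin n) (f : Fin n → ℂ) : ∑ j, dl j i * f j = f i := by
  simp [dl]

lemma sum_norm {n : ℕ} (ξ : EuclideanSpace ℝ (Fin n)) :
    ∑ i, ((ξ i : ℝ) : ℂ) * ((ξ i : ℝ) : ℂ) = ((‖ξ‖ ^ 2 : ℝ) : ℂ) := by
  rw [EuclideanSpace.norm_sq_eq]
  push_cast
  refine Finset.sum_congr rfl fun i _ => ?_
  rw [← sq, ← Complex.ofReal_pow, ← Complex.ofReal_pow, Real.norm_eq_abs, sq_abs]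

/-- contraction with the tensor -/
lemma contr {n : ℕ} (m l t : ℂ) (x X : Fin n → ℂ) (A : Fin n → Fin n → Fin n → Fin n → ℂ)
    (hA : ∀ r s α β, A r s α β = m * dl r s * dl α β + (l + m - t) * dl r α * dl s β
      + t * dl r β * dl s α) (s α : Fin n) :
    ∑ r, ∑ β, x r * A r s β α * X β
      = m * x s * X α + (l + m - t) * dl s α * (∑ β, x β * X β) + t * x α * X s := by
  have h : ∀ r β, x r * A r s β α * X β =
      dl r s * (dl β α * (m * x r * X β)) + dl r β * ((l + m - t) * dl s α * (x r * X β))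
      + dl r α * (dl s β * (t * x r * X β)) := by
    intro r β; rw [hA]; ring
  simp_rw [h, Finset.sum_add_distrib, ← Finset.mul_sum, sum_dl, sum_dl', ← Finset.mul_sum]

/-- real closed form -/
def TT {n : ℕ} (c : ℝ) (g b : Fin n) (ζ : EuclideanSpace ℝ (Fin n)) : ℝ :=
  (if g = b then 1 else 0) * (‖ζ‖ ^ 2)⁻¹ - c * (ζ g * ζ b) * ((‖ζ‖ ^ 2)⁻¹ * (‖ζ‖ ^ 2)⁻¹)

lemma TT_cast {n : ℕ} (c : ℝ) (g b : Fin n) (ζ : EuclideanSpace ℝ (Fin n)) :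
    ((TT c g b ζ : ℝ) : ℂ) = dl g b * ((‖ζ‖ ^ 2 : ℝ) : ℂ)⁻¹
      - c * ((ζ g : ℝ) : ℂ) * ((ζ b : ℝ) : ℂ) * (((‖ζ‖ ^ 2 : ℝ) : ℂ)⁻¹) ^ 2 := by
  unfold TT dl
  push_cast
  split_ifs <;> push_cast <;> ring

lemma pd_TT {n : ℕ} (w : ℂ) (c : ℝ) (g b i : Fin n) (ξ : EuclideanSpace ℝ (Fin n)) (hξ : ξ ≠ 0) :
    pd i (fun ζ => w * ((TT c g b ζ : ℝ) : ℂ)) ξ =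
      w * (-2 * ((ξ i : ℝ) : ℂ) * dl g b * (((‖ξ‖ ^ 2 : ℝ) : ℂ)⁻¹) ^ 2
        - c * (dl i g * ((ξ b : ℝ) : ℂ) + dl i b * ((ξ g : ℝ) : ℂ)) * (((‖ξ‖ ^ 2 : ℝ) : ℂ)⁻¹) ^ 2
        + 4 * c * ((ξ g : ℝ) : ℂ) * ((ξ b : ℝ) : ℂ) * ((ξ i : ℝ) : ℂ)
          * (((‖ξ‖ ^ 2 : ℝ) : ℂ)⁻¹) ^ 3) := by
  have hq : (‖ξ‖ ^ 2 : ℝ) ≠ 0 := by simpa using hξ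
  have h1 : HasFDerivAt (fun ζ : EuclideanSpace ℝ (Fin n) => ‖ζ‖ ^ 2) (2 • innerSL ℝ ξ) ξ :=
    (hasStrictFDerivAt_norm_sq ξ).hasFDerivAt
  have h2 := (hasDerivAt_inv hq).comp_hasFDerivAt ξ h1
  have hc : ∀ j : Fin n, HasFDerivAt (fun ζ : EuclideanSpace ℝ (Fin n) => ζ j)
      (EuclideanSpace.proj j : EuclideanSpace ℝ (Fin n) →L[ℝ] ℝ) ξ := fun j =>
    (EuclideanSpace.proj j : EuclideanSpace ℝ (Fin n) →L[ℝ] ℝ).hasFDerivAt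
  have h3 := (h2.const_mul (if g = b then (1:ℝ) else 0)).sub
    ((((hc g).mul (hc b)).const_mul c).mul (h2.mul h2))
  have h4 := (Complex.ofRealCLM.hasFDerivAt.comp ξ h3).const_mul w
  have h5 : pd i (fun ζ => w * ((TT c g b ζ : ℝ) : ℂ)) ξ = _ :=
    congrArg (fun L => L (EuclideanSpace.single i (1:ℝ))) h4.fderiv
  rw [h5]
  have e : ∀ j : Fin n, (((if j = i then 1 else 0 : ℝ)) : ℂ) = dl i j := by
    intro j; unfold dl
    by_cases h : j = i
    · simp [h]
    · simp [h, Ne.symm h]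
  have e' : (((if g = b then 1 else 0 : ℝ)) : ℂ) = dl g b := by
    unfold dl; split_ifs <;> simp
  have hq' : ((‖ξ‖ : ℝ) : ℂ) ≠ 0 := by simpa using hξ
  rw [← e']
  generalize (if g = b then (1 : ℝ) else 0) = D
  simp [EuclideanSpace.inner_single_right, -Complex.ofReal_inv]
  left
  simp only [e]
  push_cast
  ring

lemma S_closed {n : ℕ} (lam mu : ℝ) (hmu : 0 < mu) (hlam : 0 < 2 * mu + lam) (t : ℂ)
    (A : Fin n → Fin n → Fin n → Fin n → ℂ)
    (hA : ∀ r s α β, A r s α β = (mu : ℂ) * dl r s * dl α β + ((lam : ℂ) + mu - t) * dl r α * dl s β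
      + t * dl r β * dl s α) (ξ : EuclideanSpace ℝ (Fin n)) (γ β : Fin n) :
    (Matrix.of fun α β : Fin n =>
        -(∑ r, ∑ s, ((ξ r : ℝ) : ℂ) * ((ξ s : ℝ) : ℂ) * A r s α β))⁻¹ γ β
      = -(mu : ℂ)⁻¹ * ((TT ((lam + mu) / (2 * mu + lam)) γ β ξ : ℝ) : ℂ) := by
  set x : Fin n → ℂ := fun i => ((ξ i : ℝ) : ℂ) with hx
  have hm : (Matrix.of fun α β : Fin n =>
        -(∑ r, ∑ s, ((ξ r : ℝ) : ℂ) * ((ξ s : ℝ) : ℂ) * A r s α β))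
      = Matrix.of fun α β : Fin n =>
        -(mu * ((‖ξ‖ ^ 2 : ℝ) : ℂ) * dl α β + (lam + mu) * x α * x β) := by
    ext α β
    simp only [Matrix.of_apply, neg_inj]
    have h : ∀ r s, ((ξ r : ℝ) : ℂ) * ((ξ s : ℝ) : ℂ) * A r s α β =
      dl r s * (mu * dl α β * (x r * x s)) + dl r α * (dl s β * ((lam + mu - t) * x r * x s))
      + dl r β * (dl s α * (t * x r * x s)) := by
      intro r s; rw [hA]; simp only [hx]; ring
    simp_rw [h, Finset.sum_add_distrib, ← Finset.mul_sum, sum_dl, sum_dl', ← Finset.mul_sum]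
    rw [sum_norm]; ring
  rw [hm]
  by_cases h0 : ξ = 0
  · subst h0
    have : (Matrix.of fun α β : Fin n =>
        -((mu : ℂ) * ((‖(0 : EuclideanSpace ℝ (Fin n))‖ ^ 2 : ℝ) : ℂ) * dl α β
          + (lam + mu) * x α * x β)) = 0 := by
      ext α β; simp [hx]
    rw [this]
    simp [TT]
  · have key : (Matrix.of fun α β : Fin n =>
        -(mu * ((‖ξ‖ ^ 2 : ℝ) : ℂ) * dl α β + (lam + mu) * x α * x β))⁻¹ =
        Matrix.of fun γ β => -(mu : ℂ)⁻¹ * ((TT ((lam + mu) / (2 * mu + lam)) γ β ξ : ℝ) : ℂ) := by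
      apply Matrix.inv_eq_left_inv
      ext γ β
      have hq : ((‖ξ‖ ^ 2 : ℝ) : ℂ) ≠ 0 := by simpa using h0
      have hmu' : (mu : ℂ) ≠ 0 := by exact_mod_cast hmu.ne'
      have hl' : (2 * mu + lam : ℂ) ≠ 0 := by exact_mod_cast hlam.ne'
      simp only [Matrix.mul_apply, Matrix.of_apply, TT_cast, Matrix.one_apply]
      have hs := sum_norm ξ
      set q : ℂ := ((‖ξ‖ ^ 2 : ℝ) : ℂ)
      set c : ℂ := (((lam + mu) / (2 * mu + lam) : ℝ) : ℂ) with hc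
      have h : ∀ j, -(mu : ℂ)⁻¹ * (dl γ j * q⁻¹ - c * ((ξ γ : ℝ) : ℂ) * ((ξ j : ℝ) : ℂ) * q⁻¹ ^ 2) *
          -(mu * q * dl j β + (lam + mu) * x j * x β)
        = dl γ j * ((mu : ℂ)⁻¹ * q⁻¹ * (mu * q * dl j β + (lam + mu) * x j * x β))
          - dl j β * ((mu : ℂ)⁻¹ * c * x γ * x j * q⁻¹ ^ 2 * mu * q)
          - ((mu : ℂ)⁻¹ * c * x γ * q⁻¹ ^ 2 * (lam + mu) * x β) * (x j * x j) := by
        intro j; simp only [hx]; ring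
      simp_rw [h, Finset.sum_sub_distrib, ← Finset.mul_sum, sum_dl, sum_dl']
      rw [show ∑ i, x i * x i = q from hs]
      change _ = dl γ β
      have hcd : c * (2 * mu + lam) = lam + mu := by
        rw [hc]; push_cast; exact div_mul_cancel₀ _ hl'
      clear_value c q
      field_simp
      linear_combination (-(x γ * x β)) * hcd
    rw [key]; rfl

/-- condition 1 closed form -/
lemma cond1 {n : ℕ} (lam mu : ℝ) (hlam : 0 < 2 * mu + lam) (t w : ℂ)
    (A : Fin n → Fin n → Fin n → Fin n → ℂ)
    (hA : ∀ r s α β, A r s α β = (mu : ℂ) * dl r s * dl α β + ((lam : ℂ) + mu - t) * dl r α * dl s β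
      + t * dl r β * dl s α) (S : EuclideanSpace ℝ (Fin n) → Matrix (Fin n) (Fin n) ℂ)
    (c : ℝ) (hc : c = (lam + mu) / (2 * mu + lam))
    (hS : ∀ ξ γ β, S ξ γ β = w * ((TT c γ β ξ : ℝ) : ℂ))
    (s s' α γ : Fin n) (ξ : EuclideanSpace ℝ (Fin n)) (hξ : ξ ≠ 0) :
    (∑ β, (A s' s β α - A s s' β α) * S ξ γ β)
          + (∑ r, ∑ β, ((ξ r : ℝ) : ℂ) * A r s β α * pd s' (fun ζ => S ζ γ β) ξ)
          - (∑ r, ∑ β, ((ξ r : ℝ) : ℂ) * A r s' β α * pd s (fun ζ => S ζ γ β) ξ)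
    = w * ((lam + mu - t) * (1 - c) - t) *
      (((‖ξ‖ ^ 2 : ℝ) : ℂ)⁻¹ * (dl s α * dl s' γ - dl s' α * dl s γ)
        - (((‖ξ‖ ^ 2 : ℝ) : ℂ)⁻¹) ^ 2 * (((ξ γ : ℝ) : ℂ) *
            (dl s α * ((ξ s' : ℝ) : ℂ) - dl s' α * ((ξ s : ℝ) : ℂ))
          + ((ξ α : ℝ) : ℂ) * (dl s' γ * ((ξ s : ℝ) : ℂ) - dl s γ * ((ξ s' : ℝ) : ℂ)))) := by
  have hq : ((‖ξ‖ ^ 2 : ℝ) : ℂ) ≠ 0 := by simpa using hξ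
  have hc' : ((lam : ℂ) + mu) * (1 - c) = c * mu := by
    have hl' : (2 * mu + lam : ℂ) ≠ 0 := by exact_mod_cast hlam.ne'
    have hcd : (c : ℂ) * (2 * mu + lam) = lam + mu := by
      rw [hc]; push_cast; exact div_mul_cancel₀ _ hl'
    linear_combination -hcd
  simp only [hS]
  simp only [pd_TT _ _ _ _ _ _ hξ]
  simp only [TT_cast]
  rw [contr (mu : ℂ) lam t (fun i => ((ξ i : ℝ) : ℂ)) _ A hA s α,
    contr (mu : ℂ) lam t (fun i => ((ξ i : ℝ) : ℂ)) _ A hA s' α]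
  have hs := sum_norm ξ
  set q : ℂ := ((‖ξ‖ ^ 2 : ℝ) : ℂ)
  set x : Fin n → ℂ := fun i => ((ξ i : ℝ) : ℂ) with hx
  have hx' : ∀ i, ((ξ i : ℝ) : ℂ) = x i := fun i => rfl
  simp only [hx'] at hs ⊢
  have hqp : q * q⁻¹ = 1 := mul_inv_cancel₀ hq
  set p := q⁻¹
  have f1 : ∀ β, (A s' s β α - A s s' β α) * (w * (dl γ β * p - c * x γ * x β * p ^ 2))
      = dl s' β * ((lam + mu - 2 * t) * dl s α * (w * (dl γ β * p - c * x γ * x β * p ^ 2)))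
       - dl s β * ((lam + mu - 2 * t) * dl s' α * (w * (dl γ β * p - c * x γ * x β * p ^ 2))) := by
    intro β; rw [hA, hA, dl_comm s' s]; ring
  have f2 : ∀ i β, x β * (w * (-2 * x i * dl γ β * p ^ 2 - c * (dl i γ * x β + dl i β * x γ) * p ^ 2
        + 4 * c * x γ * x β * x i * p ^ 3))
      = dl γ β * (-2 * w * x i * p ^ 2 * x β) - dl i β * (w * c * x γ * p ^ 2 * x β)
        + (w * (4 * c * x γ * x i * p ^ 3 - c * dl i γ * p ^ 2)) * (x β * x β) := by
    intro i β; ring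
  simp_rw [f1, f2, Finset.sum_add_distrib, Finset.sum_sub_distrib, ← Finset.mul_sum, sum_dl, hs]
  have g : ∀ i, (w * (4 * c * x γ * x i * p ^ 3 - c * dl i γ * p ^ 2)) * q
      = w * (4 * c * x γ * x i * p ^ 2 - c * dl i γ * p) := by
    intro i
    linear_combination (w * (4 * c * x γ * x i * p ^ 2 - c * dl i γ * p)) * hqp
  simp_rw [g]
  rw [dl_comm γ s, dl_comm γ s', dl_comm γ α, dl_comm s' s]
  linear_combination w * p ^ 2 * (-(dl s α * x γ * x s' - dl s' α * x γ * x s)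
    + (dl s' γ * x s * x α - dl s γ * x s' * x α)) * hc'

def cs (i : Fin 2) (u : ℝ) : ℝ := if (i : ℕ) = 0 then Real.cos u else Real.sin u

lemma cs_cont (i : Fin 2) : Continuous (cs i) := by
  unfold cs; split_ifs <;> fun_prop

lemma int_cs (i j : Fin 2) :
    ∫ u in (0 : ℝ)..(2 * π), ((cs i u : ℝ) : ℂ) * ((cs j u : ℝ) : ℂ) = π * dl i j := by
  have : ∀ u, ((cs i u : ℝ) : ℂ) * ((cs j u : ℝ) : ℂ) = ((cs i u * cs j u : ℝ) : ℂ) := by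
    intro u; push_cast; ring
  simp_rw [this, intervalIntegral.integral_ofReal]
  fin_cases i <;> fin_cases j
  · simp [cs, dl, ← sq]
  · simp [cs, dl, mul_comm (Real.cos _)]
  · simp [cs, dl]
  · simp [cs, dl, ← sq]

lemma cond2 (lam mu : ℝ) (t w : ℂ)
    (A : Fin 2 → Fin 2 → Fin 2 → Fin 2 → ℂ)
    (hA : ∀ r s α β, A r s α β = (mu : ℂ) * dl r s * dl α β + ((lam : ℂ) + mu - t) * dl r α * dl s β
      + t * dl r β * dl s α) (S : EuclideanSpace ℝ (Fin 2) → Matrix (Fin 2) (Fin 2) ℂ)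
    (c : ℝ)
    (hS : ∀ ξ γ β, S ξ γ β = w * ((TT c γ β ξ : ℝ) : ℂ))
    (s s' α γ : Fin 2) :
    (∫ u in (0 : ℝ)..(2 * π),
          ∑ r, ∑ β,
            (A r s β α * ((if ((s' : ℕ) = 0) then Real.cos u else Real.sin u : ℝ) : ℂ)
              - A r s' β α * ((if ((s : ℕ) = 0) then Real.cos u else Real.sin u : ℝ) : ℂ))
            * (((if ((r : ℕ) = 0) then Real.cos u else Real.sin u : ℝ) : ℂ)
                * S ((WithLp.equiv 2 (Fin 2 → ℝ)).symm
                      (fun i => if (i : ℕ) = 0 then Real.cos u else Real.sin u)) γ β))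
    = w * π * ((lam + mu - t) * (1 - c) - t) * (dl s α * dl s' γ - dl s' α * dl s γ) := by
  have hint : ∀ u : ℝ, (∑ r, ∑ β,
            (A r s β α * ((if ((s' : ℕ) = 0) then Real.cos u else Real.sin u : ℝ) : ℂ)
              - A r s' β α * ((if ((s : ℕ) = 0) then Real.cos u else Real.sin u : ℝ) : ℂ))
            * (((if ((r : ℕ) = 0) then Real.cos u else Real.sin u : ℝ) : ℂ)
                * S ((WithLp.equiv 2 (Fin 2 → ℝ)).symm
                      (fun i => if (i : ℕ) = 0 then Real.cos u else Real.sin u)) γ β))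
      = w * ((lam + mu - t) * (1 - c)) * dl s α * (((cs γ u : ℝ) : ℂ) * ((cs s' u : ℝ) : ℂ))
        - w * ((lam + mu - t) * (1 - c)) * dl s' α * (((cs γ u : ℝ) : ℂ) * ((cs s u : ℝ) : ℂ))
        + (w * t * dl s γ * (((cs α u : ℝ) : ℂ) * ((cs s' u : ℝ) : ℂ))
        - w * t * dl s' γ * (((cs α u : ℝ) : ℂ) * ((cs s u : ℝ) : ℂ))) := by
    intro u
    set ξ : EuclideanSpace ℝ (Fin 2) := (WithLp.equiv 2 (Fin 2 → ℝ)).symm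
                      (fun i => if (i : ℕ) = 0 then Real.cos u else Real.sin u) with hξ
    have hx : ∀ i, (if ((i : Fin 2) : ℕ) = 0 then Real.cos u else Real.sin u) = ξ i := fun i => rfl
    have hx2 : ∀ i, cs i u = ξ i := fun i => rfl
    have hn : ‖ξ‖ ^ 2 = 1 := by
      rw [EuclideanSpace.norm_sq_eq]; simp [Fin.sum_univ_two, hξ]
    have hs := sum_norm ξ
    simp only [hx, hx2, hS, TT_cast, hn] at hs ⊢
    set x : Fin 2 → ℂ := fun i => ((ξ i : ℝ) : ℂ) with hx
    have hx' : ∀ i, ((ξ i : ℝ) : ℂ) = x i := fun i => rfl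
    simp only [hx', Complex.ofReal_one, inv_one, one_pow, mul_one] at hs ⊢
    have e : ∀ r β, (A r s β α * x s' - A r s' β α * x s) * (x r * (w * (dl γ β - c * x γ * x β)))
       = x s' * (x r * A r s β α * (w * (dl γ β - c * x γ * x β)))
        - x s * (x r * A r s' β α * (w * (dl γ β - c * x γ * x β))) := by intros; ring
    simp_rw [e, Finset.sum_sub_distrib, ← Finset.mul_sum]
    rw [contr (mu : ℂ) lam t x _ A hA s α, contr (mu : ℂ) lam t x _ A hA s' α]
    have e2 : ∀ β, x β * (w * (dl γ β - c * x γ * x β))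
       = dl γ β * (w * x β) - w * c * x γ * (x β * x β) := by intros; ring
    simp_rw [e2, Finset.sum_sub_distrib, ← Finset.mul_sum, sum_dl, hs]
    rw [dl_comm γ s, dl_comm γ s']
    ring
  simp_rw [hint]
  have hI : ∀ (z : ℂ) (i j : Fin 2), IntervalIntegrable
      (fun u => z * (((cs i u : ℝ) : ℂ) * ((cs j u : ℝ) : ℂ))) volume 0 (2 * π) := by
    intro z i j
    apply Continuous.intervalIntegrable
    have := cs_cont i
    have := cs_cont j
    fun_prop
  rw [intervalIntegral.integral_add ((hI _ _ _).sub (hI _ _ _)) ((hI _ _ _).sub (hI _ _ _)),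
    intervalIntegral.integral_sub (hI _ _ _) (hI _ _ _),
    intervalIntegral.integral_sub (hI _ _ _) (hI _ _ _)]
  simp_rw [intervalIntegral.integral_const_mul, int_cs]
  rw [dl_comm γ s, dl_comm γ s', dl_comm α s, dl_comm α s']
  ring

/-- For the Lamé system with moduli `μ > 0`, `2μ+λ > 0`, the coefficient
tensor `A(θ)`, with entries `a^{αβ}_{rs}(θ) = μ δ_{rs}δ_{αβ} + (λ+μ-θ)δ_{rα}δ_{sβ} + θ δ_{rβ}δ_{sα}`,
is distinguished (i.e. satisfies the conditions (Ea4-fCii-n3), and (Ea4-fCii-n2B) when `n = 2`,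
for the inverse `S(ξ)` of the symbol) if and only if `θ = μ(λ+μ)/(3μ+λ)`.
Here `a θ r s α β` stands for `a^{αβ}_{rs}(θ)`. -/
theorem statement18
    (n : ℕ) (hn : 2 ≤ n)
    (lam mu : ℝ) (hmu : 0 < mu) (hlam : 0 < 2 * mu + lam)
    (a : ℝ → Fin n → Fin n → Fin n → Fin n → ℂ)
    (ha : ∀ (θ : ℝ) (r s α β : Fin n),
      a θ r s α β = (mu : ℂ) * (if r = s then 1 else 0) * (if α = β then 1 else 0)
        + ((lam : ℂ) + mu - θ) * (if r = α then 1 else 0) * (if s = β then 1 else 0)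
        + (θ : ℂ) * (if r = β then 1 else 0) * (if s = α then 1 else 0))
    (θ : ℝ)
    (S : EuclideanSpace ℝ (Fin n) → Matrix (Fin n) (Fin n) ℂ)
    (hS : ∀ ξ : EuclideanSpace ℝ (Fin n),
      S ξ = (Matrix.of fun α β : Fin n =>
        -(∑ r, ∑ s, ((ξ r : ℝ) : ℂ) * ((ξ s : ℝ) : ℂ) * a θ r s α β))⁻¹) :
    ((∀ (s s' α γ : Fin n), ∀ ξ : EuclideanSpace ℝ (Fin n), ξ ≠ 0 →
        (∑ β, (a θ s' s β α - a θ s s' β α) * S ξ γ β)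
          + (∑ r, ∑ β, ((ξ r : ℝ) : ℂ) * a θ r s β α *
              pd s' (fun ζ => S ζ γ β) ξ)
          - (∑ r, ∑ β, ((ξ r : ℝ) : ℂ) * a θ r s' β α *
              pd s (fun ζ => S ζ γ β) ξ) = 0) ∧
      (n = 2 → ∀ s s' α γ : Fin n,
        (∫ u in (0 : ℝ)..(2 * π),
          ∑ r, ∑ β,
            (a θ r s β α * ((if ((s' : ℕ) = 0) then Real.cos u else Real.sin u : ℝ) : ℂ)
              - a θ r s' β α * ((if ((s : ℕ) = 0) then Real.cos u else Real.sin u : ℝ) : ℂ))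
            * (((if ((r : ℕ) = 0) then Real.cos u else Real.sin u : ℝ) : ℂ)
                * S ((WithLp.equiv 2 (Fin n → ℝ)).symm
                      (fun i => if (i : ℕ) = 0 then Real.cos u else Real.sin u)) γ β))
          = 0))
    ↔ θ = mu * (lam + mu) / (3 * mu + lam) := by
  have hA : ∀ r s α β, a θ r s α β = (mu : ℂ) * dl r s * dl α β
      + ((lam : ℂ) + mu - θ) * dl r α * dl s β + (θ : ℂ) * dl r β * dl s α := by
    intro r s α β; rw [ha]; rfl
  have hS' : ∀ ξ γ β, S ξ γ β
      = -(mu : ℂ)⁻¹ * ((TT ((lam + mu) / (2 * mu + lam)) γ β ξ : ℝ) : ℂ) := by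
    intro ξ γ β; rw [hS]; exact S_closed lam mu hmu hlam θ _ hA ξ γ β
  have h3 : 0 < 3 * mu + lam := by linarith
  have hK : (((lam : ℂ) + mu - θ) * (1 - (((lam + mu) / (2 * mu + lam) : ℝ) : ℂ)) - θ) = 0
      ↔ θ = mu * (lam + mu) / (3 * mu + lam) := by
    rw [eq_div_iff h3.ne']
    have : (((lam : ℂ) + mu - θ) * (1 - (((lam + mu) / (2 * mu + lam) : ℝ) : ℂ)) - θ)
      = (((mu * (lam + mu) - θ * (3 * mu + lam)) / (2 * mu + lam) : ℝ) : ℂ) := by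
      rw [← Complex.ofReal_one, ← Complex.ofReal_sub, ← Complex.ofReal_add, ← Complex.ofReal_sub,
        ← Complex.ofReal_mul, ← Complex.ofReal_sub]
      congr 1
      have hcd := div_mul_cancel₀ (lam + mu) hlam.ne'
      rw [eq_div_iff hlam.ne']
      linear_combination (-(lam + mu - θ)) * hcd
    rw [this, Complex.ofReal_eq_zero, div_eq_zero_iff, or_iff_left hlam.ne', sub_eq_zero, eq_comm]
  have hw : -(mu : ℂ)⁻¹ ≠ 0 := by simpa using hmu.ne'
  constructor
  · rintro ⟨h1, h2⟩
    rw [← hK]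
    rcases Nat.lt_or_ge 2 n with h | h
    · have hne : (EuclideanSpace.single (⟨2, h⟩ : Fin n) (1 : ℝ)) ≠ 0 := by simp
      have := h1 ⟨0, by omega⟩ ⟨1, by omega⟩ ⟨0, by omega⟩ ⟨1, by omega⟩ _ hne
      rw [cond1 lam mu hlam θ _ _ hA S _ rfl hS' _ _ _ _ _ hne] at this
      simpa [dl, hmu.ne'] using this
    · obtain rfl : n = 2 := le_antisymm h hn
      have := h2 rfl 0 1 0 1
      rw [cond2 lam mu θ _ _ hA S _ hS'] at this
      simpa [dl, hmu.ne', Real.pi_ne_zero] using this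
  · intro h
    rw [← hK] at h
    constructor
    · intro s s' α γ ξ hξ
      rw [cond1 lam mu hlam θ _ _ hA S _ rfl hS' _ _ _ _ _ hξ, h]
      ring
    · rintro rfl s s' α γ
      rw [cond2 lam mu θ _ _ hA S _ hS', h]
      ring

end
end
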